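/- arXiv:math/0209126 — 6 statements merged into one kernel-verified Lean document; each statement's English description precedes it below -/
import Mathlib

section
/- The Frobenius homomorphism maps F_n^{(k,2)} into F_n^{(k,r)}: if f ∈ ℂ[x_1,…,x_n] is a symmetric polynomial satisfying f(x, tx, t²x, …, t^k x, x_{k+2}, …, x_n) = 0 identically, then the symmetric polynomial f(x_1^{r−1}, …, x_n^{r−1}) vanishes identically on every plane x_i = t^{i−1} q^{s_i} x_1 (2 ≤ i ≤ k+1) with s_2,…,s_{k+1} ∈ {0,1,…,r−2}. -/
open MvPolynomial

/-- The Frobenius homomorphism maps `F_n^{(k,2)}` into `F_n^{(k,r)}`: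
if `f` is a symmetric polynomial with `f(x, tx, …, t^k x, x_{k+2}, …, x_n) = 0` identically,
then `f(x_1^{r-1}, …, x_n^{r-1})` is symmetric and vanishes identically on every plane
`x_i = t^{i-1} q^{s_i} x_1` (`2 ≤ i ≤ k+1`), `s_i ∈ {0,…,r-2}` (0-indexed below). -/
theorem frobenius_maps_Fk2_into_Fkr
    (k r n : ℕ) (hk : 0 < k) (hr : 2 ≤ r) (hcop : Nat.Coprime (k + 1) (r - 1))
    (t q : ℂ) (ht : IsPrimitiveRoot t (k + 1)) (hq : IsPrimitiveRoot q (r - 1))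
    (hn : k + 1 ≤ n)
    (f : MvPolynomial (Fin n) ℂ) (hsym : f.IsSymmetric)
    (hf : ∀ (x : ℂ) (y : Fin n → ℂ),
      MvPolynomial.eval
        (fun j : Fin n => if (j : ℕ) ≤ k then t ^ (j : ℕ) * x else y j) f = 0) :
    (((MvPolynomial.aeval fun i : Fin n =>
        (MvPolynomial.X i : MvPolynomial (Fin n) ℂ) ^ (r - 1)) f).IsSymmetric) ∧
    ∀ (s : ℕ → ℕ), (∀ i, s i ≤ r - 2) → ∀ (x : ℂ) (y : Fin n → ℂ),
      MvPolynomial.eval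
        (fun j : Fin n => if (j : ℕ) = 0 then x
          else if (j : ℕ) ≤ k then t ^ (j : ℕ) * q ^ (s (j : ℕ)) * x else y j)
        ((MvPolynomial.aeval fun i : Fin n =>
          (MvPolynomial.X i : MvPolynomial (Fin n) ℂ) ^ (r - 1)) f) = 0 := by
  constructor
  · intro e
    have h1 : (MvPolynomial.rename e) ((MvPolynomial.aeval fun i : Fin n =>
        (MvPolynomial.X i : MvPolynomial (Fin n) ℂ) ^ (r - 1)) f)
        = (MvPolynomial.aeval fun i : Fin n =>
        (MvPolynomial.X i : MvPolynomial (Fin n) ℂ) ^ (r - 1)) (MvPolynomial.rename e f) := by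
      rw [MvPolynomial.aeval_rename, ← AlgHom.comp_apply, MvPolynomial.comp_aeval]
      congr 2
      funext i
      simp
    rw [h1, hsym e]
  · intro s _ x y
    have hlt : ∀ j : Fin n, (if (j : ℕ) ≤ k then (j : ℕ) * (r - 1) % (k + 1) else (j : ℕ)) < n := by
      intro j
      split_ifs
      · exact lt_of_lt_of_le (Nat.mod_lt _ (Nat.succ_pos k)) hn
      · exact j.2
    let g : Fin n → Fin n := fun j => ⟨_, hlt j⟩
    have hg : Function.Injective g := by
      intro a b hab
      have h : (if (a : ℕ) ≤ k then (a : ℕ) * (r - 1) % (k + 1) else (a : ℕ))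
          = (if (b : ℕ) ≤ k then (b : ℕ) * (r - 1) % (k + 1) else (b : ℕ)) :=
        congrArg Fin.val hab
      have ha := Nat.mod_lt ((a : ℕ) * (r - 1)) (show k + 1 > 0 by omega)
      have hb := Nat.mod_lt ((b : ℕ) * (r - 1)) (show k + 1 > 0 by omega)
      apply Fin.ext
      split_ifs at h with h1 h2 h2
      · have h3 : (a : ℕ) ≡ b [MOD (k + 1)] := Nat.ModEq.cancel_right_of_coprime hcop h
        exact Nat.ModEq.eq_of_lt_of_lt h3 (by omega) (by omega)
      · omega
      · omega
      · exact h
    let e : Equiv.Perm (Fin n) := Equiv.ofBijective g (Finite.injective_iff_bijective.mp hg)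
    have key := hf (x ^ (r - 1)) (fun j => y j ^ (r - 1))
    rw [← hsym e, MvPolynomial.eval_rename] at key
    rw [← key, ← MvPolynomial.coe_aeval_eq_eval, ← MvPolynomial.coe_aeval_eq_eval,
      RingHom.coe_coe, RingHom.coe_coe, ← AlgHom.comp_apply, MvPolynomial.comp_aeval]
    congr 2
    funext j
    have he : ((e j : Fin n) : ℕ)
      = if (j : ℕ) ≤ k then (j : ℕ) * (r - 1) % (k + 1) else (j : ℕ) := rfl
    have hq1 : ∀ m : ℕ, (q ^ m) ^ (r - 1) = 1 := by
      intro m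
      rw [← pow_mul, mul_comm, pow_mul, hq.pow_eq_one, one_pow]
    simp only [map_pow, MvPolynomial.aeval_X, Function.comp]
    by_cases hj : (j : ℕ) ≤ k
    · rw [if_pos hj] at he
      have hle : ((e j : Fin n) : ℕ) ≤ k := by
        rw [he]; exact Nat.le_of_lt_succ (Nat.mod_lt _ (Nat.succ_pos k))
      rw [if_pos hle, he, if_pos hj]
      have ht1 : t ^ ((j : ℕ) * (r - 1) % (k + 1)) = (t ^ (j : ℕ)) ^ (r - 1) := by
        rw [← pow_mul, pow_eq_pow_mod ((j : ℕ) * (r - 1)) ht.pow_eq_one]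
      rw [ht1]
      split_ifs with h0
      · simp [h0]
      · rw [mul_pow, mul_pow, hq1, mul_one]
    · rw [if_neg hj] at he
      have hej : e j = j := Fin.ext he
      have h0 : (j : ℕ) ≠ 0 := by omega
      rw [hej, if_neg h0, if_neg hj, if_neg hj]
end

section
/- The set of Hall–Littlewood polynomials {P_λ(x_1,…,x_n;t)}, where λ ranges over all admissible partitions in π_n, is a basis of the ℂ-vector space F_n^{(k,2)}. (In particular, for admissible λ the defining formula for P_λ(x_1,…,x_n;t) has no pole at the primitive (k+1)-th root of unity t, and each P_λ lies in F_n^{(k,2)}.) -/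
open MvPolynomial

/-- The Vandermonde-type product `∏_{1 ≤ i < j ≤ n} (x_i - c·x_j)`. -/
noncomputable def prodLT (n : ℕ) (c : ℂ) : MvPolynomial (Fin n) ℂ :=
  ∏ p ∈ Finset.univ.filter (fun p : Fin n × Fin n => p.1 < p.2),
    (MvPolynomial.X p.1 - MvPolynomial.C c * MvPolynomial.X p.2)

/-- The scalar prefactor `∏_{i ≥ 0} ∏_{j=1}^{m_i} (1-t)/(1-t^j)` of the Hall–Littlewood
polynomial, where `m_i = #{a : λ_a = i}` (the product over `i` is effectively finite). -/
noncomputable def hlCoeff (n : ℕ) (t : ℂ) (l : Fin n → ℕ) : ℂ :=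
  ∏ i ∈ Finset.range (∑ a, l a + 1),
    ∏ j ∈ Finset.range ((Finset.univ.filter fun a : Fin n => l a = i).card),
      (1 - t) / (1 - t ^ (j + 1))

/-- `P` is the Hall–Littlewood polynomial `P_λ(x_1,…,x_n;t)`, characterized by the
denominator-cleared form of the defining formula
`P_λ = (∏_i ∏_{j=1}^{m_i} (1-t)/(1-t^j)) Σ_{w ∈ S_n} w(x^λ ∏_{i<j} (x_i - t x_j)/(x_i - x_j))`:
multiplying by the Vandermonde determinant `∏_{i<j}(x_i - x_j)` and using
`w(∏_{i<j}(x_i - x_j)) = sign(w)·∏_{i<j}(x_i - x_j)`. -/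
def IsHallLittlewood (n : ℕ) (t : ℂ) (l : Fin n → ℕ) (P : MvPolynomial (Fin n) ℂ) : Prop :=
  prodLT n 1 * P =
    MvPolynomial.C (hlCoeff n t l) *
      ∑ w : Equiv.Perm (Fin n), (Equiv.Perm.sign w : ℤ) •
        MvPolynomial.rename w ((∏ a, MvPolynomial.X a ^ l a) * prodLT n t)

namespace HLB

/-- weight `t^{inv w}` -/
noncomputable def wt (t : ℂ) {n : ℕ} (w : Equiv.Perm (Fin n)) : ℂ :=
  ∏ i : Fin n, ∏ j ∈ Finset.Ioi i, if w i < w j then 1 else t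

noncomputable def ins {n : ℕ} (q : Fin (n+1) × Equiv.Perm (Fin n)) : Equiv.Perm (Fin (n+1)) :=
  q.1.cycleRange.symm * Equiv.Perm.decomposeFin.symm (0, q.2)

lemma ins_zero {n : ℕ} (q : Fin (n+1) × Equiv.Perm (Fin n)) : ins q 0 = q.1 := by
  simp [ins]

lemma ins_succ {n : ℕ} (q : Fin (n+1) × Equiv.Perm (Fin n)) (i : Fin n) :
    ins q i.succ = q.1.succAbove (q.2 i) := by
  simp [ins]

lemma ins_bij {n : ℕ} : Function.Bijective (ins (n := n)) := by
  rw [Fintype.bijective_iff_injective_and_card]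
  constructor
  · rintro ⟨p, w⟩ ⟨p', w'⟩ h
    have h0 : p = p' := by
      have := congrArg (fun v : Equiv.Perm _ => v 0) h
      simpa [ins_zero] using this
    subst h0
    have : w = w' := by
      ext i
      have := congrArg (fun v : Equiv.Perm _ => v i.succ) h
      simp only [ins_succ] at this
      rw [Fin.succAbove_right_injective this]
    rw [this]
  · simp [Fintype.card_perm, Nat.factorial_succ]

lemma prod_succAbove_pow (t : ℂ) {n : ℕ} (p : Fin (n+1)) :
    ∏ j : Fin n, (if p < p.succAbove j then 1 else t) = t ^ (p : ℕ) := by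
  rw [Finset.prod_ite]
  simp only [Finset.prod_const_one, one_mul, Finset.prod_const]
  congr 1
  have : (Finset.univ.filter fun j : Fin n => ¬ p < p.succAbove j).map Fin.valEmbedding = Finset.range (p : ℕ) := by
    ext a
    simp only [Finset.mem_map, Finset.mem_filter, Finset.mem_univ, true_and, Fin.valEmbedding_apply,
      Finset.mem_range, Fin.lt_succAbove_iff_le_castSucc, not_le]
    constructor
    · rintro ⟨j, hj, rfl⟩
      exact hj
    · intro h
      exact ⟨⟨a, by have := p.2; omega⟩, h, rfl⟩
  rw [← Finset.card_map, this, Finset.card_range]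

lemma wt_ins (t : ℂ) {n : ℕ} (q : Fin (n+1) × Equiv.Perm (Fin n)) :
    wt t (ins q) = t ^ (q.1 : ℕ) * wt t q.2 := by
  unfold wt
  rw [Fin.prod_univ_succ]
  congr 1
  · rw [Fin.Ioi_zero_eq_map, Finset.prod_map]
    simp only [Fin.coe_succEmb, ins_zero, ins_succ]
    rw [← prod_succAbove_pow]
    exact Equiv.prod_comp q.2 (fun j => if q.1 < q.1.succAbove j then (1:ℂ) else t)
  · refine Finset.prod_congr rfl fun i _ => ?_
    rw [Fin.Ioi_succ, Finset.prod_map]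
    simp [ins_succ]

lemma sum_lower (t : ℂ) {n : ℕ} (l : Fin (n+1) → ℕ) (hl : Antitone l) :
    ∑ p : Fin (n+1), (if l p = l 0 then t ^ (p : ℕ) else 0) =
      ∑ i ∈ Finset.range (Finset.univ.filter fun a => l a = l 0).card, t ^ i := by
  rw [← Finset.sum_filter]
  set S := Finset.univ.filter fun a => l a = l 0 with hS
  have : S.map Fin.valEmbedding = Finset.range S.card := by
    apply Finset.eq_of_subset_of_card_le
    · intro a ha
      simp only [Finset.mem_map, Fin.valEmbedding_apply] at ha
      obtain ⟨p, hp, rfl⟩ := ha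
      have h1 : Finset.Iic p ⊆ S := by
        intro x hx
        simp only [hS, Finset.mem_filter, Finset.mem_univ, true_and, Finset.mem_Iic] at hx hp ⊢
        exact le_antisymm (hl (Fin.zero_le _)) (hp ▸ hl hx)
      have := Finset.card_le_card h1
      simp at this
      simp; omega
    · simp
  rw [← this, Finset.sum_map]
  simp

lemma stab_sum_ne_zero (k : ℕ) (t : ℂ) (ht : IsPrimitiveRoot t (k+1)) :
    ∀ (n : ℕ) (l : Fin n → ℕ), Antitone l →
      (∀ i : ℕ, (Finset.univ.filter fun a : Fin n => l a = i).card ≤ k) →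
      ∑ w : Equiv.Perm (Fin n), (if l ∘ w = l then wt t w else 0) ≠ 0 := by
  intro n
  induction n with
  | zero =>
    intro l _ _
    simp [wt]
  | succ n ih =>
    intro l hl hm
    rw [← (Equiv.ofBijective _ ins_bij).sum_comp, Fintype.sum_prod_type]
    have key : ∀ (p : Fin (n+1)) (w : Equiv.Perm (Fin n)),
        (if l ∘ (Equiv.ofBijective _ ins_bij (p, w)) = l then wt t (Equiv.ofBijective _ ins_bij (p, w)) else 0)
        = (if l p = l 0 then t ^ (p : ℕ) else 0) *
          (if (l ∘ Fin.succ) ∘ w = l ∘ Fin.succ then wt t w else 0) := by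
      intro p w
      rw [Equiv.ofBijective_apply, wt_ins]
      have : l ∘ ins (p, w) = l ↔ (l p = l 0 ∧ (l ∘ Fin.succ) ∘ w = l ∘ Fin.succ) := by
        have hs : l p = l 0 → ∀ j, l (p.succAbove j) = l j.succ := by
          intro hp j
          by_cases h : j.castSucc < p
          · rw [Fin.succAbove_of_castSucc_lt _ _ h]
            have h2 : j.succ ≤ p := h
            have a1 := hl h2
            have a2 := hl (Fin.zero_le j.castSucc)
            have a3 := hl (Fin.castSucc_lt_succ (i := j)).le
            omega
          · rw [Fin.succAbove_of_le_castSucc _ _ (not_lt.mp h)]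
        constructor
        · intro h
          have h0 : l p = l 0 := by simpa [ins_zero] using congrFun h 0
          refine ⟨h0, ?_⟩
          funext i
          have := congrFun h i.succ
          simp only [Function.comp_apply, ins_succ, hs h0] at this
          simpa using this
        · rintro ⟨h0, h1⟩
          funext i
          refine Fin.cases ?_ (fun i => ?_) i
          · simpa [ins_zero] using h0
          · simp only [Function.comp_apply, ins_succ, hs h0]
            exact congrFun h1 i
      simp only [this]
      split_ifs <;> simp_all
    simp only [key]
    rw [← Finset.sum_mul_sum, sum_lower t l hl]
    refine mul_ne_zero ?_ (ih _ (hl.comp_monotone (Fin.strictMono_succ.monotone)) ?_)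
    · set m := (Finset.univ.filter fun a => l a = l 0).card with hm'
      have hmk : m ≤ k := hm _
      have hpos : 0 < m := Finset.card_pos.mpr ⟨0, by simp⟩
      intro h
      have := geom_sum_mul t m
      rw [h, zero_mul] at this
      exact ht.pow_ne_one_of_pos_of_lt (by omega) (by omega : m < k+1) (sub_eq_zero.mp this.symm)
    · intro i
      refine le_trans ?_ (hm i)
      rw [← Finset.card_map (Fin.succEmb n)]
      apply Finset.card_le_card
      intro a
      simp only [Finset.mem_map, Finset.mem_filter, Finset.mem_univ, true_and]
      rintro ⟨b, hb, rfl⟩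
      exact hb

set_option linter.unusedSimpArgs false

lemma prodLT_eq (n : ℕ) (c : ℂ) :
    prodLT n c = ∏ i : Fin n, ∏ j ∈ Finset.Ioi i, (X i - C c * X j) := by
  unfold prodLT
  rw [Finset.prod_filter, ← Finset.univ_product_univ, Finset.prod_product]
  refine Finset.prod_congr rfl fun i _ => ?_
  rw [← Finset.prod_filter]
  refine Finset.prod_congr ?_ fun _ _ => rfl
  ext; simp

lemma lin_ne_zero {n : ℕ} (i j : Fin n) (h : i ≠ j) (a : ℂ) :
    (X i - C a * X j : MvPolynomial (Fin n) ℂ) ≠ 0 := by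
  intro h0
  have := congrArg (MvPolynomial.eval (Pi.single i 1)) h0
  simp [h, h.symm] at this

lemma prodLT_ne_zero (n : ℕ) (c : ℂ) : prodLT n c ≠ 0 := by
  unfold prodLT
  rw [Finset.prod_ne_zero_iff]
  intro p hp
  exact lin_ne_zero _ _ (by simpa using (Finset.mem_filter.mp hp).2.ne) _

lemma prodLT_one_vdm (n : ℕ) : prodLT n 1 =
    (∏ i : Fin n, ∏ _j ∈ Finset.Ioi i, (-1)) *
      (Matrix.vandermonde (X : Fin n → MvPolynomial (Fin n) ℂ)).det := by
  rw [prodLT_eq, Matrix.det_vandermonde, ← Finset.prod_mul_distrib]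
  refine Finset.prod_congr rfl fun i _ => ?_
  rw [← Finset.prod_mul_distrib]
  refine Finset.prod_congr rfl fun j _ => ?_
  simp

lemma rename_prodLT_one (n : ℕ) (v : Equiv.Perm (Fin n)) :
    rename v (prodLT n 1) = ((Equiv.Perm.sign v : ℤ)) • prodLT n 1 := by
  rw [prodLT_one_vdm, map_mul]
  have h1 : rename v (Matrix.vandermonde (X : Fin n → MvPolynomial (Fin n) ℂ)).det =
      (Equiv.Perm.sign v : ℤ) • (Matrix.vandermonde (X : Fin n → MvPolynomial (Fin n) ℂ)).det := by
    rw [AlgHom.map_det, zsmul_eq_mul, ← Matrix.det_permute]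
    congr 1
    ext i j
    simp [Matrix.vandermonde]
  rw [h1]
  simp [map_prod]
  ring

/-- the antisymmetrization -/
noncomputable def alt {n : ℕ} (f : MvPolynomial (Fin n) ℂ) : MvPolynomial (Fin n) ℂ :=
  ∑ w : Equiv.Perm (Fin n), (Equiv.Perm.sign w : ℤ) • rename w f

lemma rename_alt {n : ℕ} (f : MvPolynomial (Fin n) ℂ) (v : Equiv.Perm (Fin n)) :
    rename v (alt f) = (Equiv.Perm.sign v : ℤ) • alt f := by
  unfold alt
  rw [map_sum, Finset.smul_sum]
  refine Eq.trans ?_ (Equiv.sum_comp (Equiv.mulLeft v) _)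
  refine Finset.sum_congr rfl fun w _ => ?_
  rw [map_zsmul, rename_rename, smul_smul]
  simp only [Equiv.coe_mulLeft, Equiv.Perm.sign_mul, Units.val_mul, Equiv.Perm.coe_mul]
  rw [← mul_assoc, ← Units.val_mul, Int.units_mul_self, Units.val_one, one_mul]

lemma lin_dvd {n : ℕ} (f : MvPolynomial (Fin n) ℂ) (i j : Fin n) (hij : i ≠ j)
    (hf : rename (Equiv.swap i j) f = - f) : (X i - X j) ∣ f := by
  rw [← Ideal.mem_span_singleton, ← Ideal.Quotient.eq_zero_iff_mem]
  set I := Ideal.span {(X i - X j : MvPolynomial (Fin n) ℂ)}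
  have hX : Ideal.Quotient.mk I (X i) = Ideal.Quotient.mk I (X j) := by
    rw [Ideal.Quotient.eq]
    exact Ideal.mem_span_singleton_self _
  have h : (Ideal.Quotient.mkₐ ℂ I).comp (rename (Equiv.swap i j)) = Ideal.Quotient.mkₐ ℂ I := by
    apply MvPolynomial.algHom_ext
    intro a
    simp only [AlgHom.comp_apply, rename_X, Ideal.Quotient.mkₐ_eq_mk]
    by_cases h1 : a = i
    · subst h1; simp [hX]
    by_cases h2 : a = j
    · subst h2; simp [hX]
    rw [Equiv.swap_apply_of_ne_of_ne h1 h2]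
  have h2 := congrArg (fun g => g f) h
  simp only [AlgHom.comp_apply, hf, Ideal.Quotient.mkₐ_eq_mk, map_neg] at h2
  have h3 : (2:ℂ) • Ideal.Quotient.mk I f = 0 := by
    rw [two_smul]
    nth_rewrite 1 [← h2]
    simp
  have h4 := congrArg (fun y => (2:ℂ)⁻¹ • y) h3
  simpa [smul_smul] using h4

lemma lin_irred {n : ℕ} (i j : Fin n) (hij : i ≠ j) :
    Irreducible (X i - X j : MvPolynomial (Fin n) ℂ) := by
  let φ : MvPolynomial (Fin n) ℂ →ₐ[ℂ] MvPolynomial (Fin n) ℂ :=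
    aeval (fun a => if a = i then X i - X j else X a)
  let ψ : MvPolynomial (Fin n) ℂ →ₐ[ℂ] MvPolynomial (Fin n) ℂ :=
    aeval (fun a => if a = i then X i + X j else X a)
  have h1 : φ.comp ψ = AlgHom.id ℂ _ := by
    apply MvPolynomial.algHom_ext
    intro a
    by_cases h : a = i
    · subst h; simp [φ, ψ, hij.symm]
    · simp [φ, ψ, h]
  have h2 : ψ.comp φ = AlgHom.id ℂ _ := by
    apply MvPolynomial.algHom_ext
    intro a
    by_cases h : a = i
    · subst h; simp [φ, ψ, hij.symm]
    · simp [φ, ψ, h]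
  let e := AlgEquiv.ofAlgHom φ ψ h1 h2
  have h3 : e (X i) = X i - X j := by simp [e, φ]
  rw [← h3, MulEquiv.irreducible_iff]
  exact (X_prime).irreducible

lemma prodLT_dvd {n : ℕ} (f : MvPolynomial (Fin n) ℂ)
    (hf : ∀ v : Equiv.Perm (Fin n), rename v f = (Equiv.Perm.sign v : ℤ) • f) :
    prodLT n 1 ∣ f := by
  unfold prodLT
  apply Finset.prod_dvd_of_isRelPrime
  · rintro ⟨i, j⟩ hp ⟨i', j'⟩ hp' hne
    simp only [Finset.coe_filter, Finset.mem_univ, true_and, Set.mem_ofPred_eq] at hp hp'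
    simp only [Function.onFun, map_one, one_mul]
    rw [(lin_irred i j hp.ne).isRelPrime_iff_not_dvd]
    rintro ⟨q, hq⟩
    by_cases h : i' = i ∨ i' = j
    · have hj : j' ≠ i ∧ j' ≠ j := by
        constructor
        · rintro rfl
          rcases h with h | h
          · exact absurd hp' (by simp [h])
          · exact absurd hp' (by subst h; exact hp.not_gt)
        · rintro rfl
          rcases h with h | h
          · exact hne (by simp [h])
          · exact absurd hp' (by simp [h])
      have := congrArg (MvPolynomial.eval (Pi.single j' 1)) hq
      simp [hj.1, hj.2, hj.1.symm, hj.2.symm, hp'.ne] at this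
    · push Not at h
      have := congrArg (MvPolynomial.eval (Pi.single i' 1)) hq
      simp [h.1, h.2, h.1.symm, h.2.symm, hp'.ne'] at this
  · rintro ⟨i, j⟩ hp
    simp only [Finset.mem_filter, Finset.mem_univ, true_and] at hp
    simp only [map_one, one_mul]
    apply lin_dvd _ _ _ hp.ne
    rw [hf, Equiv.Perm.sign_swap hp.ne]
    simp

lemma symm_of_mul {n : ℕ} (P f : MvPolynomial (Fin n) ℂ) (h : prodLT n 1 * P = f)
    (hf : ∀ v : Equiv.Perm (Fin n), rename v f = (Equiv.Perm.sign v : ℤ) • f) :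
    P.IsSymmetric := by
  intro v
  have h1 := hf v
  rw [← h, map_mul, rename_prodLT_one, smul_mul_assoc] at h1
  have h2 := congrArg (fun y => (Equiv.Perm.sign v : ℤ) • y) h1
  simp only [smul_smul, ← Units.val_mul, Int.units_mul_self, Units.val_one, one_smul] at h2
  exact mul_left_cancel₀ (prodLT_ne_zero n 1) h2

/-- the specialization homomorphism -/
noncomputable def spec (k n : ℕ) (hn : k + 1 ≤ n) (t : ℂ) :
    MvPolynomial (Fin n) ℂ →ₐ[ℂ] MvPolynomial (Fin n) ℂ :=
  aeval (fun j : Fin n => if (j : ℕ) ≤ k then C (t ^ (j:ℕ)) * X ⟨0, by omega⟩ else X j)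

lemma eval_spec (k n : ℕ) (hn : k + 1 ≤ n) (t : ℂ) (f : MvPolynomial (Fin n) ℂ) (y : Fin n → ℂ) :
    MvPolynomial.eval y (spec k n hn t f) = MvPolynomial.eval
      (fun j : Fin n => if (j : ℕ) ≤ k then t ^ (j : ℕ) * y ⟨0, by omega⟩ else y j) f := by
  rw [spec, ← MvPolynomial.coe_aeval_eq_eval, ← MvPolynomial.coe_aeval_eq_eval]
  show aeval y (aeval _ f) = aeval _ f
  rw [← AlgHom.comp_apply, MvPolynomial.comp_aeval]
  congr 2
  funext j
  split_ifs <;> simp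

lemma spec_eq_zero_iff (k n : ℕ) (hn : k + 1 ≤ n) (t : ℂ) (f : MvPolynomial (Fin n) ℂ) :
    spec k n hn t f = 0 ↔ ∀ (x : ℂ) (y : Fin n → ℂ), MvPolynomial.eval
      (fun j : Fin n => if (j : ℕ) ≤ k then t ^ (j : ℕ) * x else y j) f = 0 := by
  constructor
  · intro h x y
    have := eval_spec k n hn t f (Function.update y ⟨0, by omega⟩ x)
    rw [h, map_zero] at this
    rw [this]
    congr 2
    funext j
    split_ifs with hj
    · simp
    · rw [Function.update_of_ne]
      rintro rfl
      simp at hj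
  · intro h
    apply MvPolynomial.funext
    intro y
    rw [eval_spec, h, map_zero]

lemma spec_prodLT_ne_zero (k n : ℕ) (hn : k + 1 ≤ n) (t : ℂ) (ht : IsPrimitiveRoot t (k+1)) :
    spec k n hn t (prodLT n 1) ≠ 0 := by
  unfold prodLT
  rw [map_prod, Finset.prod_ne_zero_iff]
  rintro ⟨i, j⟩ hp
  simp only [Finset.mem_filter, Finset.mem_univ, true_and] at hp
  have hp' : (i : ℕ) < j := hp
  simp only [spec, map_one, one_mul, map_sub, aeval_X]
  intro h0
  by_cases hi : (i : ℕ) ≤ k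
  · by_cases hj : (j : ℕ) ≤ k
    · have := congrArg (MvPolynomial.eval (fun _ => 1)) h0
      simp [hi, hj, sub_eq_zero] at this
      have := ht.pow_inj (by omega) (by omega) this
      omega
    · have := congrArg (MvPolynomial.eval (Pi.single j 1)) h0
      have h3 : (⟨0, by omega⟩ : Fin n) ≠ j := by
        intro h; rw [← h] at hj; simp at hj
      simp [hi, hj, h3, Pi.single_apply] at this
  · have hj : ¬ (j : ℕ) ≤ k := by omega
    have := congrArg (MvPolynomial.eval (Pi.single j 1)) h0
    simp [hi, hj, Pi.single_apply, hp.ne] at this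

lemma spec_rename_prodLT (k n : ℕ) (hk : 0 < k) (hn : k + 1 ≤ n) (t : ℂ) (ht : IsPrimitiveRoot t (k+1))
    (w : Equiv.Perm (Fin n)) :
    spec k n hn t (rename w (prodLT n t)) = 0 := by
  unfold prodLT
  rw [map_prod, map_prod, Finset.prod_eq_zero_iff]
  by_contra hcon
  push Not at hcon
  -- position of `a` is before position of `b` whenever `z_b = t z_a`
  have hpos : ∀ a b : Fin n, (a:ℕ) ≤ k → (b:ℕ) ≤ k → a ≠ b → t ^ (b:ℕ) = t * t ^ (a:ℕ) →
      w.symm a < w.symm b := by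
    intro a b ha hb hab h
    by_contra hlt
    have hlt : w.symm b < w.symm a :=
      lt_of_le_of_ne (not_lt.mp hlt) (fun h => hab (w.symm.injective h).symm)
    apply hcon (w.symm b, w.symm a) (by simpa using hlt)
    have h' : (C (t ^ (b:ℕ)) : MvPolynomial (Fin n) ℂ) = C t * C (t ^ (a:ℕ)) := by
      rw [h, C_mul]
    simp only [spec, map_sub, map_mul, rename_X, rename_C, Equiv.apply_symm_apply, aeval_X, ha, hb,
      if_true, h', algHom_C, algebraMap_eq]
    ring
  have hmono : ∀ m : ℕ, ∀ hm : m ≤ k, 0 < m →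
      w.symm ⟨0, by omega⟩ < w.symm ⟨m, by omega⟩ := by
    intro m
    induction m with
    | zero => intro _ h; omega
    | succ m ih =>
      intro hm _
      have h1 := hpos ⟨m, by omega⟩ ⟨m+1, by omega⟩ (by simp; omega) hm (by simp) (by simp [pow_succ'])
      rcases Nat.eq_zero_or_pos m with h | h
      · subst h; exact h1
      · exact (ih (by omega) h).trans h1
  have h1 := hmono k le_rfl (by omega)
  have h2 := hpos ⟨k, by omega⟩ ⟨0, by omega⟩ le_rfl (by simp) (by simpa using hk.ne')
    (by simp [← pow_succ', ht.pow_eq_one])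
  exact absurd h1 h2.not_gt

open MonomialOrder

/-- finsupp from function -/
noncomputable def fs {n : ℕ} (l : Fin n → ℕ) : Fin n →₀ ℕ := Finsupp.equivFunOnFinite.symm l

@[simp] lemma fs_apply {n : ℕ} (l : Fin n → ℕ) (i : Fin n) : fs l i = l i := rfl

lemma fs_inj {n : ℕ} {l l' : Fin n → ℕ} (h : fs l = fs l') : l = l' :=
  Finsupp.equivFunOnFinite.symm.injective h

noncomputable abbrev mo (n : ℕ) : MonomialOrder (Fin n) := MonomialOrder.lex

lemma mo_lt_iff {n : ℕ} (a b : Fin n →₀ ℕ) :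
    (mo n).toSyn a < (mo n).toSyn b ↔ ∃ i, (∀ j < i, a j = b j) ∧ a i < b i :=
  MonomialOrder.lex_lt_iff.trans Finsupp.Lex.lt_iff

lemma comp_le {n : ℕ} (l : Fin n → ℕ) (hl : Antitone l) (w : Equiv.Perm (Fin n)) :
    (mo n).toSyn (fs (l ∘ w)) ≤ (mo n).toSyn (fs l) := by
  rw [← not_lt, mo_lt_iff]
  rintro ⟨i, h1, h2⟩
  simp only [fs_apply, Function.comp_apply] at h1 h2
  set S := Finset.univ.filter fun a => l i < l a with hS
  have hsub : S.map w.toEmbedding ⊆ S := by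
    intro a
    simp only [Finset.mem_map, hS, Finset.mem_filter, Finset.mem_univ, true_and]
    rintro ⟨b, hb, rfl⟩
    have hbi : b < i := by
      by_contra h
      exact absurd (hl (not_lt.mp h)) (by omega)
    have := h1 b hbi
    simp only [Equiv.coe_toEmbedding]
    omega
  have heq := Finset.eq_of_subset_of_card_le hsub (by simp)
  have : w i ∈ S.map w.toEmbedding := by
    rw [heq]; simpa [hS] using h2
  simp [hS] at this

lemma rename_mono {n : ℕ} (l : Fin n → ℕ) (w : Equiv.Perm (Fin n)) :
    rename w (∏ a, (X a : MvPolynomial (Fin n) ℂ) ^ l a) = monomial (fs (l ∘ w.symm)) 1 := by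
  rw [map_prod, monomial_eq, Finsupp.prod_fintype _ _ (by simp), ← Equiv.prod_comp w (fun i => X i ^ (fs (l ∘ w.symm)) i)]
  simp

lemma lin_degree {n : ℕ} (i j : Fin n) (h : i ≠ j) (t : ℂ) (ht : t ≠ 0) :
    (mo n).degree (X i - C t * X j) = Finsupp.single (min i j) 1 ∧
    (mo n).leadingCoeff (X i - C t * X j) = if i < j then 1 else -t := by
  have hd : ∀ a : Fin n, (mo n).degree (X a : MvPolynomial (Fin n) ℂ) = Finsupp.single a 1 :=
    fun a => MonomialOrder.degree_X
  have hd2 : (mo n).degree (C t * X j : MvPolynomial (Fin n) ℂ) = Finsupp.single j 1 := by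
    rw [MonomialOrder.degree_mul (by simpa using ht) (by simp), hd, MonomialOrder.degree_C, zero_add]
  have hlt : ∀ a b : Fin n, a < b →
      (mo n).toSyn (Finsupp.single b 1) < (mo n).toSyn (Finsupp.single a 1) := by
    intro a b hab
    exact MonomialOrder.lex_lt_iff.mpr (Finsupp.Lex.single_lt_iff.mpr hab)
  rcases lt_or_gt_of_ne h with h | h
  · have h' : (mo n).toSyn ((mo n).degree (C t * X j : MvPolynomial (Fin n) ℂ)) <
      (mo n).toSyn ((mo n).degree (X i : MvPolynomial (Fin n) ℂ)) := by
      rw [hd2, hd]; exact hlt _ _ h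
    rw [MonomialOrder.degree_sub_of_lt h', MonomialOrder.leadingCoeff_sub_of_lt h', hd]
    simp [h, h.le]
  · have h' : (mo n).toSyn ((mo n).degree (X i : MvPolynomial (Fin n) ℂ)) <
      (mo n).toSyn ((mo n).degree (C t * X j : MvPolynomial (Fin n) ℂ)) := by
      rw [hd2, hd]; exact hlt _ _ h
    rw [← neg_sub, MonomialOrder.degree_neg, MonomialOrder.leadingCoeff_neg,
      MonomialOrder.degree_sub_of_lt h', MonomialOrder.leadingCoeff_sub_of_lt h', hd2]
    simp [h.le, h.not_gt]

lemma rename_prodLT {n : ℕ} (t : ℂ) (w : Equiv.Perm (Fin n)) :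
    rename w (prodLT n t) = ∏ i : Fin n, ∏ j ∈ Finset.Ioi i, (X (w i) - C t * X (w j)) := by
  rw [prodLT_eq]
  simp [map_prod]

noncomputable def rho (n : ℕ) : Fin n →₀ ℕ := (mo n).degree (prodLT n 1)

lemma degree_rename_prodLT {n : ℕ} (t : ℂ) (ht : t ≠ 0) (w : Equiv.Perm (Fin n)) :
    (mo n).degree (rename w (prodLT n t)) = rho n := by
  have key : ∀ t : ℂ, t ≠ 0 → (mo n).degree (rename w (prodLT n t)) =
      ∑ i : Fin n, ∑ j ∈ Finset.Ioi i, Finsupp.single (min (w i) (w j)) 1 := by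
    intro t ht
    have hne : ∀ i : Fin n, ∀ j ∈ Finset.Ioi i, w i ≠ w j := by
      intro i j hj
      exact fun h => (Finset.mem_Ioi.mp hj).ne (w.injective h)
    have h0 : ∀ i : Fin n, ∀ j ∈ Finset.Ioi i,
        (X (w i) - C t * X (w j) : MvPolynomial (Fin n) ℂ) ≠ 0 :=
      fun i j hj => lin_ne_zero _ _ (hne i j hj) _
    rw [rename_prodLT, MonomialOrder.degree_prod]
    · refine Finset.sum_congr rfl fun i _ => ?_
      rw [MonomialOrder.degree_prod (h0 i)]
      exact Finset.sum_congr rfl fun j hj => (lin_degree _ _ (hne i j hj) t ht).1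
    · intro i _
      exact Finset.prod_ne_zero_iff.mpr (h0 i)
  rw [key t ht, ← key 1 one_ne_zero, rename_prodLT_one]
  rcases Int.units_eq_one_or (Equiv.Perm.sign w) with h | h
  · simp [h, rho]
  · simp [h, rho, MonomialOrder.degree_neg]

lemma leadingCoeff_prod' {n : ℕ} {ι : Type*} (s : Finset ι) (f : ι → MvPolynomial (Fin n) ℂ) :
    (mo n).leadingCoeff (∏ i ∈ s, f i) = ∏ i ∈ s, (mo n).leadingCoeff (f i) := by
  classical
  induction s using Finset.induction_on with
  | empty => simp
  | insert a s ha ih => rw [Finset.prod_insert ha, Finset.prod_insert ha, MonomialOrder.leadingCoeff_mul, ih]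

lemma lc_rename_prodLT {n : ℕ} (t : ℂ) (ht : t ≠ 0) (w : Equiv.Perm (Fin n)) :
    (mo n).leadingCoeff (rename w (prodLT n t)) * ((Equiv.Perm.sign w : ℤ) : ℂ) = wt t w := by
  rw [rename_prodLT, Equiv.Perm.sign_eq_prod_prod_Ioi, leadingCoeff_prod']
  simp only [Units.coe_prod, Int.cast_prod]
  rw [← Finset.prod_mul_distrib]
  refine Finset.prod_congr rfl fun i _ => ?_
  rw [leadingCoeff_prod', ← Finset.prod_mul_distrib]
  refine Finset.prod_congr rfl fun j hj => ?_
  have hne : w i ≠ w j := fun h => (Finset.mem_Ioi.mp hj).ne (w.injective h)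
  rw [(lin_degree _ _ hne t ht).2]
  split_ifs <;> simp

noncomputable def A {n : ℕ} (t : ℂ) (l : Fin n → ℕ) : MvPolynomial (Fin n) ℂ :=
  alt ((∏ a, X a ^ l a) * prodLT n t)

lemma term_degree {n : ℕ} (t : ℂ) (ht : t ≠ 0) (l : Fin n → ℕ) (w : Equiv.Perm (Fin n)) :
    (mo n).degree (rename w ((∏ a, X a ^ l a) * prodLT n t)) = fs (l ∘ w.symm) + rho n := by
  classical
  rw [map_mul, rename_mono, MonomialOrder.degree_mul, degree_rename_prodLT t ht,
    MonomialOrder.degree_monomial]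
  · simp
  · simp
  · rw [Ne, map_eq_zero_iff _ (rename_injective _ w.injective)]
    exact prodLT_ne_zero n t

lemma A_degree_le {n : ℕ} (t : ℂ) (ht : t ≠ 0) (l : Fin n → ℕ) (hl : Antitone l) :
    (mo n).toSyn ((mo n).degree (A t l)) ≤ (mo n).toSyn (fs l + rho n) := by
  unfold A alt
  refine MonomialOrder.degree_sum_le.trans ?_
  rw [Finset.sup_le_iff]
  intro w _
  have h1 : (mo n).toSyn ((mo n).degree ((Equiv.Perm.sign w : ℤ) •
      rename w ((∏ a, X a ^ l a) * prodLT n t))) = (mo n).toSyn (fs (l ∘ w.symm) + rho n) := by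
    rw [← term_degree t ht]
    rcases Int.units_eq_one_or (Equiv.Perm.sign w) with h | h
    · simp [h]
    · rw [h]; simp only [Units.val_neg, Units.val_one, neg_smul, one_smul, MonomialOrder.degree_neg]
  rw [h1, map_add, map_add]
  exact add_le_add_left (comp_le l hl w.symm) _

lemma A_coeff {n : ℕ} (t : ℂ) (ht : t ≠ 0) (l : Fin n → ℕ) (hl : Antitone l) :
    coeff (fs l + rho n) (A t l) =
      ∑ w : Equiv.Perm (Fin n), (if l ∘ w = l then wt t w else 0) := by
  unfold A alt
  rw [coeff_sum]
  refine Finset.sum_congr rfl fun w _ => ?_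
  have hz : coeff (fs l + rho n) ((Equiv.Perm.sign w : ℤ) • rename w ((∏ a, X a ^ l a) * prodLT n t))
      = coeff (fs l + rho n) (rename w ((∏ a, X a ^ l a) * prodLT n t)) *
        ((Equiv.Perm.sign w : ℤ) : ℂ) := by
    rw [← Int.cast_smul_eq_zsmul ℂ, coeff_smul, smul_eq_mul, mul_comm]
  rw [hz]
  have hiff : l ∘ w = l ↔ l ∘ w.symm = l := by
    constructor
    · intro h; conv_lhs => rw [← h]
      funext i; simp
    · intro h; conv_lhs => rw [← h]
      funext i; simp
  split_ifs with h
  · have h' := hiff.mp h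
    have hdeg := term_degree t ht l w
    rw [h'] at hdeg
    rw [← lc_rename_prodLT t ht, ← hdeg]
    congr 1
    show (mo n).leadingCoeff _ = _
    rw [map_mul, MonomialOrder.leadingCoeff_mul, rename_mono, MonomialOrder.leadingCoeff_monomial, one_mul]
  · rw [MonomialOrder.coeff_eq_zero_of_lt (m := mo n), zero_mul]
    rw [term_degree t ht, map_add, map_add]
    refine add_lt_add_left (lt_of_le_of_ne (comp_le l hl w.symm) ?_) _
    intro h2
    exact h (hiff.mpr (fs_inj ((mo n).toSyn.injective h2)))

lemma hlCoeff_ne_zero (k n : ℕ) (hk : 0 < k) (t : ℂ) (ht : IsPrimitiveRoot t (k+1)) (l : Fin n → ℕ)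
    (hm : ∀ i : ℕ, (Finset.univ.filter fun a : Fin n => l a = i).card ≤ k) : hlCoeff n t l ≠ 0 := by
  unfold hlCoeff
  rw [Finset.prod_ne_zero_iff]
  intro i _
  rw [Finset.prod_ne_zero_iff]
  intro j hj
  have h1 := hm i
  have h2 := Finset.mem_range.mp hj
  have : ∀ m, 0 < m → m ≤ k → 1 - t ^ m ≠ 0 := by
    intro m h0 h1 h
    exact ht.pow_ne_one_of_pos_of_lt (by omega) (by omega : m < k+1) (sub_eq_zero.mp h).symm
  refine div_ne_zero ?_ (this _ (by omega) (by omega))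
  simpa using this 1 (by omega) (by omega)

lemma exists_P (k n : ℕ) (hk : 0 < k) (t : ℂ) (ht : IsPrimitiveRoot t (k + 1)) (hn : k + 1 ≤ n)
    (l : Fin n → ℕ) (hl : Antitone l)
    (hm : ∀ i : ℕ, (Finset.univ.filter fun a : Fin n => l a = i).card ≤ k) :
    ∃ P : MvPolynomial (Fin n) ℂ, IsHallLittlewood n t l P ∧ P.IsSymmetric ∧
      spec k n hn t P = 0 ∧ P ≠ 0 ∧ (mo n).degree P = fs l := by
  have ht0 : t ≠ 0 := ht.ne_zero (by omega)
  have hren : ∀ v : Equiv.Perm (Fin n), rename v (C (hlCoeff n t l) * A t l) =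
      (Equiv.Perm.sign v : ℤ) • (C (hlCoeff n t l) * A t l) := by
    intro v
    rw [map_mul, rename_C, A, rename_alt, mul_smul_comm]
  obtain ⟨P, hP⟩ := prodLT_dvd _ hren
  have hcoeff : coeff (fs l + rho n) (C (hlCoeff n t l) * A t l) ≠ 0 := by
    rw [coeff_C_mul, A_coeff t ht0 l hl]
    exact mul_ne_zero (hlCoeff_ne_zero k n hk t ht l hm) (stab_sum_ne_zero k t ht n l hl hm)
  have hne : C (hlCoeff n t l) * A t l ≠ 0 := by
    intro h; rw [h] at hcoeff; simp at hcoeff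
  have hP0 : P ≠ 0 := by
    rintro rfl; rw [mul_zero] at hP; exact hne hP
  have hA0 : A t l ≠ 0 := right_ne_zero_of_mul hne
  refine ⟨P, hP.symm, symm_of_mul P _ hP.symm hren, ?_, hP0, ?_⟩
  · have h1 := congrArg (spec k n hn t) hP
    rw [map_mul, map_mul] at h1
    have h2 : spec k n hn t (A t l) = 0 := by
      rw [A, alt, map_sum]
      refine Finset.sum_eq_zero fun w _ => ?_
      rw [map_zsmul, map_mul, map_mul, spec_rename_prodLT k n hk hn t ht, mul_zero, smul_zero]
    rw [h2, mul_zero] at h1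
    exact (mul_eq_zero.mp h1.symm).resolve_left (spec_prodLT_ne_zero k n hn t ht)
  · have hd : (mo n).degree (C (hlCoeff n t l) * A t l) = fs l + rho n := by
      apply (mo n).toSyn.injective
      apply le_antisymm
      · rw [MonomialOrder.degree_mul (left_ne_zero_of_mul hne) hA0, MonomialOrder.degree_C, zero_add]
        exact A_degree_le t ht0 l hl
      · exact MonomialOrder.le_degree (mem_support_iff.mpr hcoeff)
    rw [hP, MonomialOrder.degree_mul (prodLT_ne_zero n 1) hP0] at hd
    change rho n + _ = _ at hd
    rw [add_comm] at hd
    exact add_right_cancel hd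

lemma coeff_comp {n : ℕ} (f : MvPolynomial (Fin n) ℂ) (hf : f.IsSymmetric) (v : Fin n → ℕ)
    (w : Equiv.Perm (Fin n)) : coeff (fs (v ∘ w)) f = coeff (fs v) f := by
  have h1 : (fs (v ∘ w)).mapDomain w = fs v := by
    ext i
    obtain ⟨j, rfl⟩ := w.surjective i
    rw [Finsupp.mapDomain_apply w.injective]
    simp
  have h2 := coeff_rename_mapDomain w w.injective f (fs (v ∘ w))
  rw [hf w, h1] at h2
  exact h2.symm

lemma fs_coe {n : ℕ} (d : Fin n →₀ ℕ) : fs (d : Fin n → ℕ) = d := by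
  ext; simp

lemma comp_le_degree {n : ℕ} (f : MvPolynomial (Fin n) ℂ) (hf : f.IsSymmetric) (v : Fin n → ℕ)
    (hv : coeff (fs v) f ≠ 0) (w : Equiv.Perm (Fin n)) :
    (mo n).toSyn (fs (v ∘ w)) ≤ (mo n).toSyn ((mo n).degree f) := by
  apply MonomialOrder.le_degree
  rw [mem_support_iff, coeff_comp f hf]
  exact hv

lemma degree_antitone {n : ℕ} (f : MvPolynomial (Fin n) ℂ) (hf : f.IsSymmetric) (h0 : f ≠ 0) :
    Antitone ((mo n).degree f : Fin n → ℕ) := by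
  intro i j hij
  by_contra hlt
  push Not at hlt
  have hne : i < j := lt_of_le_of_ne hij (by rintro rfl; exact lt_irrefl _ hlt)
  have h1 := comp_le_degree f hf ((mo n).degree f)
    (by rw [fs_coe]; exact MonomialOrder.coeff_degree_ne_zero_iff.mpr h0) (Equiv.swap i j)
  rw [← not_lt, mo_lt_iff] at h1
  apply h1
  refine ⟨i, ?_, ?_⟩
  · intro a ha
    simp [Equiv.swap_apply_of_ne_of_ne ha.ne (ha.trans hne).ne]
  · simpa using hlt

/-- the exponent after specialization -/
noncomputable def push (k n : ℕ) (hn : k + 1 ≤ n) (v : Fin n → ℕ) : Fin n →₀ ℕ :=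
  ∑ j : Fin n, Finsupp.single (if (j:ℕ) ≤ k then ⟨0, by omega⟩ else j) (v j)

lemma spec_monomial (k n : ℕ) (hn : k + 1 ≤ n) (t : ℂ) (v : Fin n →₀ ℕ) (c : ℂ) :
    spec k n hn t (monomial v c) = monomial (push k n hn v)
      (c * ∏ j : Fin n, (if (j:ℕ) ≤ k then t ^ (j:ℕ) else 1) ^ v j) := by
  rw [spec, aeval_monomial, Finsupp.prod_fintype _ _ (by simp), push, algebraMap_eq,
    ← C_mul_monomial]
  congr 1
  rw [← mul_one (∏ j : Fin n, (if (j:ℕ) ≤ k then t ^ (j:ℕ) else 1) ^ v j), ← C_mul_monomial, monomial_sum_one, map_prod,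
    ← Finset.prod_mul_distrib]
  refine Finset.prod_congr rfl fun j _ => ?_
  split_ifs
  · rw [mul_pow, X_pow_eq_monomial, ← C_pow]
  · rw [X_pow_eq_monomial]; simp

lemma push_apply_zero (k n : ℕ) (hn : k + 1 ≤ n) (v : Fin n → ℕ) :
    push k n hn v ⟨0, by omega⟩ = ∑ j ∈ Finset.univ.filter (fun j : Fin n => (j:ℕ) ≤ k), v j := by
  rw [push, Finsupp.finsetSum_apply, Finset.sum_filter]
  refine Finset.sum_congr rfl fun j _ => ?_
  split_ifs with h
  · simp
  · rw [Finsupp.single_apply, if_neg]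
    intro h'; rw [h'] at h; simp at h

lemma push_apply (k n : ℕ) (hn : k + 1 ≤ n) (v : Fin n → ℕ) (i : Fin n) (hi : k < (i:ℕ)) :
    push k n hn v i = v i := by
  rw [push, Finsupp.finsetSum_apply, Finset.sum_eq_single i]
  · simp [hi.not_ge]
  · intro j _ hj
    rw [Finsupp.single_apply, if_neg]
    split_ifs
    · intro h; rw [← h] at hi; simp at hi
    · exact hj
  · simp

lemma degree_admissible (k n : ℕ) (hn : k + 1 ≤ n) (t : ℂ) (ht : t ≠ 0)
    (f : MvPolynomial (Fin n) ℂ) (hf : f.IsSymmetric) (h0 : f ≠ 0) (hs : spec k n hn t f = 0)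
    (r : ℕ) : (Finset.univ.filter fun a : Fin n => (mo n).degree f a = r).card ≤ k := by
  by_contra hcard
  push Not at hcard
  set l := (mo n).degree f with hl
  obtain ⟨S, hS, hSc⟩ := Finset.exists_subset_card_eq (n := k+1) hcard
  have hlS : ∀ a ∈ S, l a = r := fun a ha => (Finset.mem_filter.mp (hS ha)).2
  -- a permutation mapping the first block to `S`
  obtain ⟨w, hw⟩ : ∃ w : Equiv.Perm (Fin n), ∀ j : Fin n, (j:ℕ) ≤ k ↔ w j ∈ S := by
    have hc : Fintype.card {j : Fin n // (j:ℕ) ≤ k} = Fintype.card {j : Fin n // j ∈ S} := by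
      rw [Fintype.card_coe, hSc, Fintype.card_subtype, ← Finset.card_map Fin.valEmbedding,
        ← Finset.card_range (k+1)]
      congr 1
      ext a
      simp only [Finset.mem_map, Finset.mem_filter, Finset.mem_univ, true_and,
        Fin.valEmbedding_apply, Finset.mem_range]
      constructor
      · rintro ⟨b, hb, rfl⟩; omega
      · intro h; exact ⟨⟨a, by omega⟩, by simp; omega, rfl⟩
    let e := Fintype.equivOfCardEq hc
    refine ⟨e.extendSubtype, fun j => ⟨fun h => e.extendSubtype_mem j h, fun h => ?_⟩⟩
    by_contra hj
    exact e.extendSubtype_not_mem j hj h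
  set u : Fin n → ℕ := l ∘ w with hu
  have hcu : coeff (fs u) f ≠ 0 := by
    rw [hu, coeff_comp f hf, fs_coe]
    exact MonomialOrder.coeff_degree_ne_zero_iff.mpr h0
  have hub : ∀ j : Fin n, (j:ℕ) ≤ k → u j = r := fun j hj => hlS _ ((hw j).mp hj)
  -- uniqueness
  have huniq : ∀ v : Fin n →₀ ℕ, coeff v f ≠ 0 → push k n hn v = push k n hn u → v = fs u := by
    intro v hv hp
    have hoff : ∀ j : Fin n, ¬ (j:ℕ) ≤ k → v j = u j := by
      intro j hj
      rw [← push_apply k n hn v j (by omega), hp, push_apply k n hn u j (by omega)]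
    have hsum := congrArg (fun d : Fin n →₀ ℕ => d ⟨0, by omega⟩) hp
    simp only [push_apply_zero] at hsum
    have hle : ∀ j : Fin n, (j:ℕ) ≤ k → v j ≤ u j := by
      intro j0 hj0
      rw [hub j0 hj0]
      by_contra hgt
      push Not at hgt
      have hSne : S.Nonempty := by rw [← Finset.card_pos]; omega
      set a := S.min' hSne with ha
      have haS : a ∈ S := S.min'_mem hSne
      have h1 := comp_le_degree f hf v (by rwa [fs_coe]) (w.symm * Equiv.swap a (w j0) : Equiv.Perm (Fin n))
      rw [← not_lt, mo_lt_iff] at h1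
      apply h1
      have hwj : w j0 ∈ S := (hw j0).mp hj0
      have haj : a ≤ w j0 := S.min'_le _ hwj
      refine ⟨a, ?_, ?_⟩
      · intro b hb
        have hbS : b ∉ S := fun h => absurd (S.min'_le b h) (not_le.mpr hb)
        have : ¬ ((w.symm b : Fin n) : ℕ) ≤ k := by
          rw [hw]; simpa using hbS
        simp only [fs_apply, Function.comp_apply, Equiv.Perm.coe_mul]
        rw [Equiv.swap_apply_of_ne_of_ne hb.ne (hb.trans_le haj).ne, hoff _ this]
        simp [hu, hl]
      · simp only [fs_apply, Function.comp_apply, Equiv.Perm.coe_mul, Equiv.swap_apply_left,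
          Equiv.symm_apply_apply]
        rw [← hl, hlS a haS]
        exact hgt
    have heq := (Finset.sum_eq_sum_iff_of_le (s := Finset.univ.filter (fun j : Fin n => (j:ℕ) ≤ k))
      (fun j hj => hle j (Finset.mem_filter.mp hj).2)).mp hsum
    ext j
    by_cases hj : (j:ℕ) ≤ k
    · exact heq j (by simpa using hj)
    · exact hoff j hj
  have hcoef := congrArg (coeff (push k n hn u)) hs
  rw [f.as_sum, map_sum, coeff_sum, Finset.sum_eq_single (fs u)] at hcoef
  · rw [spec_monomial, coeff_monomial, if_pos (by rfl), coeff_zero] at hcoef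
    refine mul_ne_zero hcu (Finset.prod_ne_zero_iff.mpr fun j _ => pow_ne_zero _ ?_) hcoef
    split_ifs
    · exact pow_ne_zero _ ht
    · exact one_ne_zero
  · intro v hv hvu
    rw [spec_monomial, coeff_monomial, if_neg]
    intro h
    exact hvu (huniq v (mem_support_iff.mp hv) h)
  · intro h
    exact absurd (mem_support_iff.mpr hcu) h

lemma linInd {n : ℕ} {ι : Type*} (P : ι → MvPolynomial (Fin n) ℂ) (h0 : ∀ i, P i ≠ 0)
    (hinj : Function.Injective fun i => (mo n).degree (P i)) : LinearIndependent ℂ P := by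
  classical
  rw [linearIndependent_iff']
  intro s g hg
  by_contra hcon
  push Not at hcon
  obtain ⟨i0, hi0, hgi0⟩ := hcon
  obtain ⟨i, hi, hmax⟩ := Finset.exists_max_image (s.filter fun i => g i ≠ 0)
    (fun i => (mo n).toSyn ((mo n).degree (P i))) ⟨i0, by simp [hi0, hgi0]⟩
  have hi' := Finset.mem_filter.mp hi
  have h1 := congrArg (coeff ((mo n).degree (P i))) hg
  rw [coeff_sum, Finset.sum_eq_single i, coeff_smul, coeff_zero, smul_eq_mul] at h1
  · exact mul_ne_zero hi'.2 (MonomialOrder.coeff_degree_ne_zero_iff.mpr (h0 i)) h1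
  · intro j hj hji
    rw [coeff_smul, smul_eq_mul]
    by_cases hgj : g j = 0
    · rw [hgj, zero_mul]
    · rw [MonomialOrder.coeff_eq_zero_of_lt (m := mo n), mul_zero]
      refine lt_of_le_of_ne (hmax j (by simp [hj, hgj])) ?_
      intro h
      exact hji (hinj ((mo n).toSyn.injective h))
  · intro h; exact absurd hi'.1 h

lemma span_aux (k n : ℕ) (hn : k + 1 ≤ n) (t : ℂ) (ht : t ≠ 0)
    (P : {l : Fin n → ℕ // Antitone l ∧
            ∀ i : ℕ, (Finset.univ.filter fun a : Fin n => l a = i).card ≤ k}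
          → MvPolynomial (Fin n) ℂ)
    (hP : ∀ l, (P l).IsSymmetric ∧ spec k n hn t (P l) = 0 ∧ P l ≠ 0 ∧ (mo n).degree (P l) = fs l.1) :
    ∀ (d : (mo n).syn) (f : MvPolynomial (Fin n) ℂ), (mo n).toSyn ((mo n).degree f) = d →
      f.IsSymmetric → spec k n hn t f = 0 → f ∈ Submodule.span ℂ (Set.range P) := by
  intro d
  induction d using WellFoundedLT.induction with
  | ind d ih =>
    intro f hd hf hs
    by_cases h0 : f = 0
    · rw [h0]; exact Submodule.zero_mem _
    let l : {l : Fin n → ℕ // Antitone l ∧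
            ∀ i : ℕ, (Finset.univ.filter fun a : Fin n => l a = i).card ≤ k} :=
      ⟨(mo n).degree f, degree_antitone f hf h0, degree_admissible k n hn t ht f hf h0 hs⟩
    obtain ⟨p1, p2, p3, p4⟩ := hP l
    have p5 : (mo n).degree (P l) = (mo n).degree f := by rw [p4]; exact fs_coe _
    have hlc := MonomialOrder.leadingCoeff_ne_zero_iff (m := mo n).mpr p3
    set c := (mo n).leadingCoeff f / (mo n).leadingCoeff (P l) with hc
    set g := f - c • P l with hg
    have hPl : P l ∈ Submodule.span ℂ (Set.range P) := Submodule.subset_span ⟨l, rfl⟩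
    have hfg : f = g + c • P l := by simp [hg]
    rw [hfg]
    refine Submodule.add_mem _ ?_ (Submodule.smul_mem _ _ hPl)
    by_cases hg0 : g = 0
    · rw [hg0]; exact Submodule.zero_mem _
    have hgs : g.IsSymmetric := hf.sub (p1.smul c)
    have hgspec : spec k n hn t g = 0 := by rw [hg, map_sub, map_smul, hs, p2]; simp
    refine ih _ ?_ g rfl hgs hgspec
    rw [← hd]
    refine lt_of_le_of_ne ?_ ?_
    · refine MonomialOrder.degree_sub_le.trans (sup_le le_rfl ?_)
      refine MonomialOrder.degree_smul_le.trans ?_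
      rw [p5]
    · intro h
      have h' := (mo n).toSyn.injective h
      apply MonomialOrder.coeff_degree_ne_zero_iff.mpr hg0
      rw [h', hg, coeff_sub, coeff_smul, smul_eq_mul]
      nth_rewrite 2 [← p5]
      change (mo n).leadingCoeff f - c * (mo n).leadingCoeff (P l) = 0
      rw [hc, div_mul_cancel₀ _ hlc, sub_self]

end HLB

/-- the Hall–Littlewood polynomials `P_λ(x_1,…,x_n;t)`, with `λ` ranging over
the admissible partitions in `π_n` (each value occurring at most `k` times), are well
defined at the primitive `(k+1)`-th root of unity `t`, lie in `F_n^{(k,2)}`, and form a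
basis of `F_n^{(k,2)}`. -/
theorem hall_littlewood_basis_of_Fk2
    (k n : ℕ) (hk : 0 < k) (t : ℂ) (ht : IsPrimitiveRoot t (k + 1)) (hn : k + 1 ≤ n) :
    ∃ P : {l : Fin n → ℕ // Antitone l ∧
            ∀ i : ℕ, (Finset.univ.filter fun a : Fin n => l a = i).card ≤ k}
          → MvPolynomial (Fin n) ℂ,
      (∀ l, IsHallLittlewood n t l.1 (P l)) ∧
      (∀ l, (P l).IsSymmetric ∧
        ∀ (x : ℂ) (y : Fin n → ℂ),
          MvPolynomial.eval
            (fun j : Fin n => if (j : ℕ) ≤ k then t ^ (j : ℕ) * x else y j) (P l) = 0) ∧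
      LinearIndependent ℂ P ∧
      Submodule.span ℂ (Set.range P) =
        Submodule.span ℂ {f : MvPolynomial (Fin n) ℂ |
          f.IsSymmetric ∧
          ∀ (x : ℂ) (y : Fin n → ℂ),
            MvPolynomial.eval
              (fun j : Fin n => if (j : ℕ) ≤ k then t ^ (j : ℕ) * x else y j) f = 0} := by
  have hex := fun l : {l : Fin n → ℕ // Antitone l ∧
            ∀ i : ℕ, (Finset.univ.filter fun a : Fin n => l a = i).card ≤ k} =>
    HLB.exists_P k n hk t ht hn l.1 l.2.1 l.2.2
  choose P h1 h2 h3 h4 h5 using hex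
  refine ⟨P, h1, fun l => ⟨h2 l, (HLB.spec_eq_zero_iff k n hn t _).mp (h3 l)⟩, ?_, ?_⟩
  · refine HLB.linInd P h4 fun a b hab => ?_
    simp only [h5] at hab
    exact Subtype.ext (HLB.fs_inj hab)
  · apply le_antisymm
    · apply Submodule.span_mono
      rintro _ ⟨l, rfl⟩
      exact ⟨h2 l, (HLB.spec_eq_zero_iff k n hn t _).mp (h3 l)⟩
    · rw [Submodule.span_le]
      rintro f ⟨hf, hs⟩
      exact HLB.span_aux k n hn t (ht.ne_zero (by omega)) P
        (fun l => ⟨h2 l, h3 l, h4 l, h5 l⟩) _ f rfl hf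
        ((HLB.spec_eq_zero_iff k n hn t _).mpr hs)
end

section
/- For every m ≥ 0 and every n ≥ k+1, the dimension of the space of polynomials in F_n^{(k,2)} that are homogeneous of degree m equals the number of admissible partitions λ ∈ π_n of weight |λ| = m. Equivalently, the character Σ_{n,m} dim(F_{n,m}^{(k,2)}) z^n v^m equals the product ∏_{s=0}^∞ (1 + v^s z + v^{2s} z² + … + v^{ks} z^k) = ∏_{s=0}^∞ (1 − (v^s z)^{k+1})/(1 − v^s z) as a formal power series in z and v. -/
open MvPolynomial

namespace FK

abbrev Rg (m : ℕ) := MvPolynomial (Fin (m+1)) ℂ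
abbrev Ix (m : ℕ) := Fin (m+1) →₀ ℕ

def fw {m : ℕ} (c : Fin (m+1) → ℕ) : Ix m →+ ℕ where
  toFun a := ∑ i, a i * c i
  map_zero' := by simp
  map_add' a b := by simp [add_mul, Finset.sum_add_distrib]

lemma fw_single {m : ℕ} (c : Fin (m+1) → ℕ) (i : Fin (m+1)) (r : ℕ) :
    fw c (Finsupp.single i r) = r * c i := by
  change ∑ j, (Finsupp.single i r) j * c j = _
  rw [Finset.sum_eq_single i]
  · simp
  · intro j _ hj
    simp [Finsupp.single_apply, Ne.symm hj]
  · simp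

def dg {m : ℕ} : Ix m →+ ℕ := fw (fun _ => 1)
def wt {m : ℕ} : Ix m →+ ℕ := fw (fun i => (i : ℕ))
def qd {m : ℕ} : Ix m →+ ℕ := fw (fun i => (i : ℕ) ^ 2)

lemma dg_eq {m : ℕ} (a : Ix m) : dg a = ∑ i, a i := by
  change ∑ i, a i * 1 = _
  simp

noncomputable def T (m d w q : ℕ) : Submodule ℂ (Rg m) :=
  Submodule.span ℂ ((fun a : Ix m => (monomial a (1:ℂ) : Rg m)) ''
    {a | dg a = d ∧ wt a = w ∧ q ≤ qd a})

lemma mono_mem_T {m d w q : ℕ} {a : Ix m} (h1 : dg a = d) (h2 : wt a = w) (h3 : q ≤ qd a) :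
    (monomial a (1:ℂ) : Rg m) ∈ T m d w q :=
  Submodule.subset_span ⟨a, ⟨h1, h2, h3⟩, rfl⟩

lemma T_mono {m d w q q' : ℕ} (h : q ≤ q') : T m d w q' ≤ T m d w q := by
  apply Submodule.span_mono
  rintro _ ⟨a, ⟨h1, h2, h3⟩, rfl⟩
  exact ⟨a, ⟨h1, h2, h.trans h3⟩, rfl⟩

lemma T_mul {m d w q d' w' q' : ℕ} {p p' : Rg m} (h : p ∈ T m d w q) (h' : p' ∈ T m d' w' q') :
    p * p' ∈ T m (d + d') (w + w') (q + q') := by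
  have : T m d w q * T m d' w' q' ≤ T m (d + d') (w + w') (q + q') := by
    unfold T
    rw [Submodule.span_mul_span, Submodule.span_le]
    rintro _ ⟨_, ⟨a, ⟨h1, h2, h3⟩, rfl⟩, _, ⟨b, ⟨k1, k2, k3⟩, rfl⟩, rfl⟩
    simp only [monomial_mul, mul_one]
    apply mono_mem_T
    · rw [map_add, h1, k1]
    · rw [map_add, h2, k2]
    · rw [map_add]; omega
  exact this (Submodule.mul_mem_mul h h')

def PP {m : ℕ} (p : Rg m) (a : Ix m) : Prop :=
  ∃ c : ℂ, c ≠ 0 ∧ p - c • (monomial a (1:ℂ) : Rg m) ∈ T m (dg a) (wt a) (qd a + 1)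

lemma PP.mem {m : ℕ} {p : Rg m} {a : Ix m} (h : PP p a) : p ∈ T m (dg a) (wt a) (qd a) := by
  obtain ⟨c, hc, h⟩ := h
  have := Submodule.add_mem _ (T_mono (Nat.le_succ _) h)
    (Submodule.smul_mem _ c (mono_mem_T (a := a) rfl rfl le_rfl))
  simpa using this

lemma PP.mul {m : ℕ} {p p' : Rg m} {a a' : Ix m} (h : PP p a) (h' : PP p' a') :
    PP (p * p') (a + a') := by
  have hm := h'.mem
  obtain ⟨c, hc, h⟩ := h
  obtain ⟨c', hc', h'⟩ := h'
  refine ⟨c * c', mul_ne_zero hc hc', ?_⟩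
  have e : p * p' - (c * c') • (monomial (a + a') (1:ℂ) : Rg m)
      = (p - c • (monomial a (1:ℂ) : Rg m)) * p'
        + c • ((monomial a (1:ℂ) : Rg m) * (p' - c' • (monomial a' (1:ℂ) : Rg m))) := by
    have : (monomial (a + a') (1:ℂ) : Rg m) = monomial a 1 * monomial a' 1 := by simp
    rw [this]
    simp only [MvPolynomial.smul_eq_C_mul, C_mul]
    ring
  rw [e, map_add, map_add, map_add]
  apply Submodule.add_mem
  · have := T_mul h hm
    rwa [show qd a + 1 + qd a' = qd a + qd a' + 1 by ring] at this
  · apply Submodule.smul_mem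
    have := T_mul (mono_mem_T (a := a) rfl rfl le_rfl) h'
    rwa [← add_assoc] at this

lemma PP_one {m : ℕ} : PP (1 : Rg m) 0 := by
  refine ⟨1, one_ne_zero, ?_⟩
  simp

lemma PP_X {m : ℕ} (i : Fin (m+1)) : PP (X i : Rg m) (Finsupp.single i 1) := by
  refine ⟨1, one_ne_zero, ?_⟩
  simp [X]

lemma PP.pow {m : ℕ} {p : Rg m} {a : Ix m} (h : PP p a) (r : ℕ) : PP (p ^ r) (r • a) := by
  induction r with
  | zero => simpa using PP_one
  | succ r ih => rw [pow_succ, succ_nsmul]; exact ih.mul h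

lemma PP_prod {m : ℕ} {ι : Type*} (s : Finset ι) (p : ι → Rg m) (a : ι → Ix m)
    (h : ∀ i, PP (p i) (a i)) : PP (∏ i ∈ s, p i) (∑ i ∈ s, a i) := by
  classical
  induction s using Finset.induction_on with
  | empty => simpa using PP_one
  | insert i s hi ih => rw [Finset.prod_insert hi, Finset.sum_insert hi]; exact (h i).mul ih

/-- counts -/
noncomputable def cnt {m n : ℕ} (b : Fin n → Fin (m+1)) : Ix m := ∑ j, Finsupp.single (b j) 1

lemma prod_X {m n : ℕ} (b : Fin n → Fin (m+1)) :
    ∏ j, (X (b j) : Rg m) = monomial (cnt b) 1 := by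
  rw [cnt, monomial_sum_one]
  rfl

lemma dg_cnt {m n : ℕ} (b : Fin n → Fin (m+1)) : dg (cnt b) = n := by
  simp [cnt, dg, map_sum, fw_single]
lemma wt_cnt {m n : ℕ} (b : Fin n → Fin (m+1)) : wt (cnt b) = ∑ j, (b j : ℕ) := by
  simp [cnt, wt, map_sum, fw_single]
lemma qd_cnt {m n : ℕ} (b : Fin n → Fin (m+1)) : qd (cnt b) = ∑ j, (b j : ℕ) ^ 2 := by
  simp [cnt, qd, map_sum, fw_single]

lemma cnt_apply {m n : ℕ} (b : Fin n → Fin (m+1)) (i : Fin (m+1)) :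
    cnt b i = (Finset.univ.filter fun j => b j = i).card := by
  simp [cnt, Finsupp.finsetSum_apply, Finsupp.single_apply]

/-- coefficient of x^d in ∏ E(t^j x) -/
noncomputable def hh (m k : ℕ) (t : ℂ) (d : ℕ) : Rg m :=
  ∑ b : Fin (k+1) → Fin (m+1), if ∑ j, (b j : ℕ) = d then
    (t ^ (∑ j : Fin (k+1), (j : ℕ) * (b j : ℕ))) • ∏ j, (X (b j) : Rg m) else 0

noncomputable def gg (m k : ℕ) (t : ℂ) (s : Fin (m+1)) : Rg m := hh m k t ((k+1) * s)

lemma sq_lt {N s : ℕ} (b : Fin N → ℕ) (h : ∑ j, b j = N * s) (hb : ∃ j, b j ≠ s) :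
    N * s ^ 2 + 1 ≤ ∑ j, b j ^ 2 := by
  have h1 : (0:ℤ) < ∑ j, ((b j : ℤ) - s) ^ 2 := by
    obtain ⟨j, hj⟩ := hb
    apply Finset.sum_pos' (fun _ _ => sq_nonneg _)
    refine ⟨j, Finset.mem_univ _, ?_⟩
    have : (b j : ℤ) - s ≠ 0 := by omega
    positivity
  have h2 : ∑ j, ((b j : ℤ) - s) ^ 2 = (∑ j, (b j : ℤ)^2) - 2 * s * (∑ j, (b j : ℤ)) + N * s ^ 2 := by
    simp only [sub_sq, Finset.sum_add_distrib, Finset.sum_sub_distrib, Finset.mul_sum]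
    simp
    apply Finset.sum_congr rfl; intros; ring
  have h3 : (∑ j, (b j : ℤ)) = N * s := by exact_mod_cast h
  rw [h2, h3] at h1
  have h4 : (N * s ^ 2 + 1 : ℤ) ≤ ∑ j, (b j : ℤ)^2 := by nlinarith
  exact_mod_cast h4

lemma PP_gg (m k : ℕ) (t : ℂ) (ht : t ≠ 0) (s : Fin (m+1)) :
    PP (gg m k t s) (Finsupp.single s (k+1)) := by
  refine ⟨t ^ (∑ j : Fin (k+1), (j : ℕ) * (s : ℕ)), pow_ne_zero _ ht, ?_⟩
  have e : (monomial (Finsupp.single s (k+1)) (1:ℂ) : Rg m) = ∏ j : Fin (k+1), X s := by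
    simp [X_pow_eq_monomial]
  rw [gg, hh, ← Finset.add_sum_erase _ _ (Finset.mem_univ (fun _ => s)), e]
  simp only [Finset.sum_const, Finset.card_univ, Fintype.card_fin, smul_eq_mul, if_true]
  rw [add_sub_cancel_left]
  apply Submodule.sum_mem
  intro b hb
  split_ifs with h
  · apply Submodule.smul_mem
    rw [prod_X]
    apply mono_mem_T
    · rw [dg_cnt]; simp [dg, fw_single]
    · rw [wt_cnt, h, wt, fw_single]
    · rw [qd_cnt, qd, fw_single]
      apply sq_lt _ h
      by_contra hc
      push Not at hc
      apply (Finset.mem_erase.1 hb).1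
      funext j
      exact Fin.ext (hc j)
  · exact Submodule.zero_mem _

noncomputable def BB (m k : ℕ) (t : ℂ) (a : Ix m) : Rg m :=
  ∏ s, (gg m k t s ^ (a s / (k+1)) * X s ^ (a s % (k+1)))

lemma PP_BB (m k : ℕ) (t : ℂ) (ht : t ≠ 0) (a : Ix m) : PP (BB m k t a) a := by
  have := PP_prod Finset.univ (fun s => gg m k t s ^ (a s / (k+1)) * X s ^ (a s % (k+1)))
    (fun s => (a s / (k+1)) • Finsupp.single s (k+1) + (a s % (k+1)) • Finsupp.single s 1)
    (fun s => ((PP_gg m k t ht s).pow _).mul ((PP_X s).pow _))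
  suffices e : ∑ s, ((a s / (k+1)) • Finsupp.single s (k+1) + (a s % (k+1)) • Finsupp.single s 1)
      = a by rwa [e] at this
  ext i
  simp only [Finsupp.finsetSum_apply, Finsupp.add_apply, Finsupp.smul_apply, Finsupp.single_apply]
  rw [Finset.sum_eq_single i]
  · simp [Nat.div_add_mod']
  · intro j _ hj; simp [hj]
  · simp

lemma BB_adm (m k : ℕ) (t : ℂ) (a : Ix m) (h : ∀ i, a i ≤ k) : BB m k t a = monomial a 1 := by
  rw [BB, monomial_eq]
  simp only [C_1, one_mul]
  rw [Finsupp.prod_fintype _ _ (by simp)]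
  apply Finset.prod_congr rfl
  intro s _
  have := h s
  rw [Nat.div_eq_of_lt (by omega), Nat.mod_eq_of_lt (by omega)]
  simp

lemma BB_add (m k : ℕ) (t : ℂ) (a : Ix m) (s : Fin (m+1)) :
    BB m k t (a + Finsupp.single s (k+1)) = gg m k t s * BB m k t a := by
  rw [BB, BB, ← Finset.mul_prod_erase _ _ (Finset.mem_univ s),
    ← Finset.mul_prod_erase (a := s) (s := Finset.univ)
      (f := fun s => (gg m k t s ^ (a s / (k+1)) * X s ^ (a s % (k+1)))) (Finset.mem_univ s)]
  have : ∀ x ∈ Finset.univ.erase s, (a + Finsupp.single s (k+1)) x = a x := by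
    intro x hx
    have := (Finset.mem_erase.1 hx).1
    simp [Finsupp.single_apply, this.symm]
  rw [Finset.prod_congr rfl (fun x hx => by rw [this x hx])]
  simp only [Finsupp.add_apply, Finsupp.single_eq_same, Nat.add_mod_right]
  rw [Nat.add_div_right _ (Nat.succ_pos k), pow_succ]
  ring

lemma qd_le {m : ℕ} (a : Ix m) : qd a ≤ dg a * m ^ 2 := by
  rw [dg_eq, Finset.sum_mul]
  change ∑ i, a i * (i:ℕ)^2 ≤ _
  apply Finset.sum_le_sum
  intro i _
  have : (i : ℕ) ≤ m := by omega
  gcongr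

lemma mono_mem_BB (m k : ℕ) (t : ℂ) (ht : t ≠ 0) (d w : ℕ) (a : Ix m) (h1 : dg a = d)
    (h2 : wt a = w) :
    (monomial a (1:ℂ) : Rg m) ∈ Submodule.span ℂ (BB m k t '' {a | dg a = d ∧ wt a = w}) := by
  obtain ⟨r, hr⟩ : ∃ r, r = d * m ^ 2 - qd a := ⟨_, rfl⟩
  induction r using Nat.strong_induction_on generalizing a with
  | _ r ih =>
  obtain ⟨c, hc, h⟩ := PP_BB m k t ht a
  have h' : BB m k t a - c • (monomial a (1:ℂ) : Rg m) ∈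
      Submodule.span ℂ (BB m k t '' {a | dg a = d ∧ wt a = w}) := by
    refine Submodule.span_le.2 ?_ h
    rintro _ ⟨a', ⟨k1, k2, k3⟩, rfl⟩
    have := qd_le a'
    rw [k1, h1] at this
    exact ih _ (by omega) a' (k1.trans h1) (k2.trans h2) rfl
  have h3 := Submodule.sub_mem _
    (Submodule.subset_span (R := ℂ) (s := BB m k t '' {a | dg a = d ∧ wt a = w})
      ⟨a, ⟨h1, h2⟩, rfl⟩) h'
  rw [sub_sub_cancel] at h3
  exact (Submodule.smul_mem_iff _ hc).1 h3

lemma curve {V : Type*} [AddCommGroup V] [Module ℂ V] (W : Submodule ℂ V) (D : ℕ) (v : ℕ → V)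
    (h : ∀ x : ℂ, ∑ i ∈ Finset.range D, x ^ i • v i ∈ W) (i : ℕ) (hi : i < D) : v i ∈ W := by
  by_contra hv
  obtain ⟨f, hf, hW⟩ := Submodule.exists_le_ker_of_notMem hv
  have : (∑ i ∈ Finset.range D, Polynomial.monomial i (f (v i))) = 0 := by
    apply Polynomial.funext
    intro x
    have := hW (h x)
    rw [LinearMap.mem_ker, map_sum] at this
    simp only [Polynomial.eval_finsetSum, Polynomial.eval_monomial, Polynomial.eval_zero]
    rw [← this]
    apply Finset.sum_congr rfl
    intros
    simp [mul_comm]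
  have h2 := congrArg (fun p => Polynomial.coeff p i) this
  simp [Polynomial.finsetSum_coeff, Polynomial.coeff_monomial, hi] at h2
  exact hf h2

noncomputable def EE (m : ℕ) (y : ℂ) : Rg m := ∑ i : Fin (m+1), (y ^ (i:ℕ)) • (X i : Rg m)

lemma prod_EE {m n : ℕ} (y : Fin n → ℂ) :
    ∏ j, EE m (y j) = ∑ b : Fin n → Fin (m+1),
      (∏ j, y j ^ (b j : ℕ)) • (monomial (cnt b) (1:ℂ) : Rg m) := by
  simp only [EE]
  rw [Fintype.prod_sum]
  apply Finset.sum_congr rfl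
  intro b _
  rw [← prod_X, Finset.prod_smul]

lemma GG_eq (m k : ℕ) (t x : ℂ) :
    ∏ j : Fin (k+1), EE m (t ^ (j:ℕ) * x) =
      ∑ d ∈ Finset.range ((k+1)*m+1), x ^ d • hh m k t d := by
  rw [prod_EE]
  simp only [hh, Finset.smul_sum]
  rw [Finset.sum_comm]
  apply Finset.sum_congr rfl
  intro b _
  have hb : ∑ j, (b j : ℕ) ∈ Finset.range ((k+1)*m+1) := by
    rw [Finset.mem_range, Nat.lt_succ_iff]
    calc ∑ j, (b j : ℕ) ≤ ∑ j : Fin (k+1), m := Finset.sum_le_sum (fun j _ => by omega)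
      _ = _ := by simp
  rw [Finset.sum_eq_single_of_mem _ hb]
  · simp only [if_true]
    rw [smul_smul, prod_X]
    congr 1
    simp only [mul_pow, Finset.prod_mul_distrib, Finset.prod_pow_eq_pow_sum, ← pow_mul]
    ring
  · intro d _ hd
    rw [if_neg (Ne.symm hd), smul_zero]

lemma hh_zero (m k : ℕ) (t : ℂ) (ht : IsPrimitiveRoot t (k+1)) (d : ℕ) (hd : ¬ (k+1) ∣ d) :
    hh m k t d = 0 := by
  have h : hh m k t d = t ^ d • hh m k t d := by
    conv_rhs => rw [hh]
    conv_lhs => rw [hh, ← Equiv.sum_comp (Equiv.arrowCongr (Equiv.addRight (1 : Fin (k+1))) (Equiv.refl (Fin (m+1))))]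
    rw [Finset.smul_sum]
    apply Finset.sum_congr rfl
    intro b _
    have e1 : ∀ (f : Fin (k+1) → ℕ), ∑ j, f j = ∑ j, f (j + 1) := fun f =>
      (Equiv.sum_comp (Equiv.addRight (1 : Fin (k+1))) f).symm
    have e2 : ∀ (f : Fin (k+1) → Rg m), ∏ j, f j = ∏ j, f (j + 1) := fun f =>
      (Equiv.prod_comp (Equiv.addRight (1 : Fin (k+1))) f).symm
    rw [e1 (fun j => (((Equiv.arrowCongr (Equiv.addRight (1 : Fin (k+1))) (Equiv.refl (Fin (m+1)))) b) j : ℕ)),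
      e1 (fun j => (j : ℕ) * (((Equiv.arrowCongr (Equiv.addRight (1 : Fin (k+1))) (Equiv.refl (Fin (m+1)))) b) j : ℕ)),
      e2 (fun j => X (((Equiv.arrowCongr (Equiv.addRight (1 : Fin (k+1))) (Equiv.refl (Fin (m+1)))) b) j))]
    simp only [Equiv.arrowCongr_apply, Equiv.coe_refl, Function.comp, id, Equiv.addRight_symm,
      Equiv.coe_addRight, add_neg_cancel_right]
    split_ifs with hs
    · rw [smul_smul]
      congr 1
      rw [← hs, ← pow_add, ← Finset.sum_add_distrib, ← Finset.prod_pow_eq_pow_sum,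
        ← Finset.prod_pow_eq_pow_sum]
      apply Finset.prod_congr rfl
      intro j _
      rw [show (b j : ℕ) + (j:ℕ) * (b j : ℕ) = ((j:ℕ) + 1) * (b j : ℕ) by ring, pow_mul, pow_mul]
      congr 1
      rw [Fin.val_add, Fin.val_one']
      rw [← pow_mod_orderOf t ((j:ℕ)+1), ← ht.eq_orderOf]
      congr 1
      simp
    · simp
  have h2 : (1 - t ^ d) • hh m k t d = 0 := by
    rw [sub_smul, one_smul, ← h, sub_self]
  rcases smul_eq_zero.1 h2 with h3 | h3
  · exact absurd ((ht.pow_eq_one_iff_dvd d).1 (sub_eq_zero.1 h3).symm) hd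
  · exact h3

lemma X_mem (m : ℕ) (i : Fin (m+1)) :
    (X i : Rg m) ∈ Submodule.span ℂ (Set.range (EE m)) := by
  have := curve (Submodule.span ℂ (Set.range (EE m))) (m+1)
    (fun i => if h : i < m+1 then (X ⟨i, h⟩ : Rg m) else 0) (fun x => by
      rw [Finset.sum_range]
      simp only [Fin.is_lt, dite_true, Fin.eta]
      exact Submodule.subset_span ⟨x, rfl⟩) i i.2
  simpa only [Fin.is_lt, dite_true, Fin.eta] using this

lemma gg_mem (m k : ℕ) (t : ℂ) (s : Fin (m+1)) :
    gg m k t s ∈ Submodule.span ℂ (Set.range (fun x => ∏ j : Fin (k+1), EE m (t ^ (j:ℕ) * x))) := by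
  refine curve _ ((k+1)*m+1) (hh m k t) (fun x => ?_) ((k+1) * s) ?_
  · rw [← GG_eq]
    exact Submodule.subset_span ⟨x, rfl⟩
  · have : (s:ℕ) ≤ m := by omega
    have := Nat.mul_le_mul_left (k+1) this
    omega

lemma GG_mem (m k : ℕ) (t : ℂ) (ht : IsPrimitiveRoot t (k+1)) (x : ℂ) :
    ∏ j : Fin (k+1), EE m (t ^ (j:ℕ) * x) ∈ Submodule.span ℂ (Set.range (gg m k t)) := by
  rw [GG_eq]
  apply Submodule.sum_mem
  intro d hd
  apply Submodule.smul_mem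
  by_cases h : (k+1) ∣ d
  · obtain ⟨s, rfl⟩ := h
    have : s < m + 1 := by
      rw [Finset.mem_range, Nat.lt_succ_iff] at hd
      have := Nat.le_of_mul_le_mul_left hd (Nat.succ_pos k)
      omega
    exact Submodule.subset_span ⟨⟨s, this⟩, rfl⟩
  · rw [hh_zero m k t ht d h]
    exact Submodule.zero_mem _

def pt (k : ℕ) (t : ℂ) {n : ℕ} (x : ℂ) (y : Fin n → ℂ) : Fin n → ℂ :=
  fun j : Fin n => if (j : ℕ) ≤ k then t ^ (j : ℕ) * x else y j

lemma prod_pt (m k r : ℕ) (t x : ℂ) (y : Fin (k+1+r) → ℂ) :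
    ∏ j, EE m (pt k t x y j) = (∏ j : Fin (k+1), EE m (t ^ (j:ℕ) * x)) *
      ∏ j : Fin r, EE m (y (Fin.natAdd (k+1) j)) := by
  rw [Fin.prod_univ_add]
  congr 1
  · apply Finset.prod_congr rfl
    intro j _
    have : (j:ℕ) ≤ k := by omega
    simp [pt, this]
  · apply Finset.prod_congr rfl
    intro j _
    simp only [pt, Fin.val_natAdd]
    rw [if_neg (by omega)]

lemma mono_mem_pow (m : ℕ) (a : Ix m) (S : Submodule ℂ (Rg m)) (hS : ∀ i, (X i : Rg m) ∈ S) :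
    (monomial a (1:ℂ) : Rg m) ∈ S ^ (dg a) := by
  rw [monomial_eq, Finsupp.prod_fintype _ _ (by simp), dg_eq]
  simp only [C_1, one_mul]
  rw [← Finset.prod_pow_eq_pow_sum]
  have : ∀ s : Finset (Fin (m+1)), ∏ i ∈ s, (X i : Rg m) ^ a i ∈ ∏ i ∈ s, S ^ a i := by
    intro s
    induction s using Finset.induction_on with
    | empty => simp only [Finset.prod_empty]; exact Submodule.one_le.1 le_rfl
    | insert i s hi ih =>
      rw [Finset.prod_insert hi, Finset.prod_insert hi]
      exact Submodule.mul_mem_mul (Submodule.pow_mem_pow _ (hS i) _) ih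
  exact this _

open Pointwise in
lemma keyA (m k r : ℕ) (t : ℂ) (L : Rg m →ₗ[ℂ] ℂ)
    (h : ∀ (x : ℂ) (y : Fin (k+1+r) → ℂ), L (∏ j, EE m (pt k t x y j)) = 0)
    (s : Fin (m+1)) (a : Ix m) (ha : dg a = r) : L (gg m k t s * monomial a 1) = 0 := by
  have h1 := Submodule.mul_mem_mul (gg_mem m k t s) (mono_mem_pow m a _ (X_mem m))
  rw [Submodule.span_pow, Submodule.span_mul_span, ha] at h1
  have h2 : Submodule.span ℂ (Set.range (fun x => ∏ j : Fin (k+1), EE m (t ^ (j:ℕ) * x)) *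
      Set.range (EE m) ^ r) ≤ LinearMap.ker L := by
    rw [Submodule.span_le]
    rintro _ ⟨_, ⟨x, rfl⟩, p, hp, rfl⟩
    obtain ⟨f, rfl⟩ := Set.mem_pow.1 hp
    choose y hy using fun i => (f i).2
    have := h x (fun j => if hj : (j:ℕ) - (k+1) < r then y ⟨j - (k+1), hj⟩ else 0)
    rw [prod_pt] at this
    simp only [Fin.val_natAdd, add_tsub_cancel_left, Fin.is_lt, dite_true, Fin.eta, hy] at this
    rw [SetLike.mem_coe, LinearMap.mem_ker, List.prod_ofFn]
    exact this
  exact h2 h1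

lemma EE_mem (m r : ℕ) (y : Fin r → ℂ) : ∏ j, EE m (y j) ∈
    Submodule.span ℂ ((fun a : Ix m => (monomial a (1:ℂ) : Rg m)) '' {a | dg a = r}) := by
  rw [prod_EE]
  apply Submodule.sum_mem
  intro b _
  exact Submodule.smul_mem _ _ (Submodule.subset_span ⟨_, dg_cnt b, rfl⟩)

open Pointwise in
lemma keyB (m k r : ℕ) (t : ℂ) (ht : IsPrimitiveRoot t (k+1)) (L : Rg m →ₗ[ℂ] ℂ)
    (h : ∀ (s : Fin (m+1)) (a : Ix m), dg a = r → L (gg m k t s * monomial a 1) = 0)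
    (x : ℂ) (y : Fin (k+1+r) → ℂ) : L (∏ j, EE m (pt k t x y j)) = 0 := by
  rw [prod_pt]
  have h1 := Submodule.mul_mem_mul (GG_mem m k t ht x)
    (EE_mem m r (fun j => y (Fin.natAdd (k+1) j)))
  rw [Submodule.span_mul_span] at h1
  have h2 : Submodule.span ℂ (Set.range (gg m k t) * ((fun a : Ix m => (monomial a (1:ℂ) : Rg m)) '' {a | dg a = r})) ≤ LinearMap.ker L := by
    rw [Submodule.span_le]
    rintro _ ⟨_, ⟨s, rfl⟩, _, ⟨a, ha, rfl⟩, rfl⟩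
    exact h s a ha
  exact h2 h1

lemma cnt_surj {m n : ℕ} (a : Ix m) (ha : dg a = n) : ∃ b : Fin n → Fin (m+1), cnt b = a := by
  rw [dg_eq] at ha
  have hc : Fintype.card (Fin n) = Fintype.card (Σ i : Fin (m+1), Fin (a i)) := by
    simp [ha]
  let e := Fintype.equivOfCardEq hc
  refine ⟨fun j => (e j).1, ?_⟩
  ext i
  rw [cnt_apply, ← Fintype.card_subtype]
  have e2 : {j // (e j).1 = i} ≃ {p : (Σ i : Fin (m+1), Fin (a i)) // p.1 = i} :=
    e.subtypeEquiv (fun _ => Iff.rfl)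
  rw [Fintype.card_congr (e2.trans (Equiv.sigmaSubtype i)), Fintype.card_fin]

lemma perm_of_card {n : ℕ} {γ : Type*} [DecidableEq γ] (b b' : Fin n → γ)
    (h : ∀ i, (Finset.univ.filter fun j => b j = i).card =
      (Finset.univ.filter fun j => b' j = i).card) :
    ∃ σ : Equiv.Perm (Fin n), b = b' ∘ σ := by
  have e : ∀ i, {j // b j = i} ≃ {j // b' j = i} := fun i =>
    Fintype.equivOfCardEq (by rw [Fintype.card_subtype, Fintype.card_subtype, h])
  refine ⟨Equiv.ofFiberEquiv e, ?_⟩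
  funext j
  exact (Equiv.ofFiberEquiv_map e j).symm

lemma cnt_perm {m n : ℕ} (b b' : Fin n → Fin (m+1)) (h : cnt b = cnt b') :
    ∃ σ : Equiv.Perm (Fin n), b = b' ∘ σ := by
  apply perm_of_card
  intro i
  rw [← cnt_apply, ← cnt_apply, h]

lemma cnt_comp {m n : ℕ} (b : Fin n → Fin (m+1)) (σ : Equiv.Perm (Fin n)) :
    cnt (b ∘ σ) = cnt b :=
  Equiv.sum_comp σ (fun j => Finsupp.single (b j) 1)

noncomputable def toF {m n : ℕ} (b : Fin n → Fin (m+1)) : Fin n →₀ ℕ :=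
  Finsupp.equivFunOnFinite.symm (fun j => (b j : ℕ))

lemma toF_apply {m n : ℕ} (b : Fin n → Fin (m+1)) (j : Fin n) : toF b j = b j := rfl

lemma toF_inj {m n : ℕ} {b b' : Fin n → Fin (m+1)} (h : toF b = toF b') : b = b' := by
  funext j
  exact Fin.ext (DFunLike.congr_fun h j)

lemma toF_degree {m n : ℕ} (b : Fin n → Fin (m+1)) : (toF b).degree = wt (cnt b) := by
  rw [wt_cnt, Finsupp.degree_eq_sum]
  rfl

lemma exists_toF {m n : ℕ} (d : Fin n →₀ ℕ) (h : d.degree = m) :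
    ∃ b : Fin n → Fin (m+1), toF b = d := by
  have : ∀ j, d j < m + 1 := fun j => by
    rw [← h, Nat.lt_succ_iff, Finsupp.degree_eq_sum]
    exact Finset.single_le_sum (f := fun j => d j) (fun _ _ => Nat.zero_le _) (Finset.mem_univ j)
  exact ⟨fun j => ⟨d j, this j⟩, by ext j; rfl⟩

lemma toF_comp {m n : ℕ} (b : Fin n → Fin (m+1)) (σ : Equiv.Perm (Fin n)) :
    Finsupp.mapDomain σ (toF (b ∘ σ)) = toF b := by
  ext j
  obtain ⟨i, rfl⟩ := σ.surjective j
  rw [Finsupp.mapDomain_apply σ.injective]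
  rfl

lemma coeff_sym {m n : ℕ} {f : MvPolynomial (Fin n) ℂ} (hf : f.IsSymmetric)
    (b b' : Fin n → Fin (m+1)) (h : cnt b = cnt b') : coeff (toF b) f = coeff (toF b') f := by
  obtain ⟨σ, rfl⟩ := cnt_perm b b' h
  rw [← toF_comp b' σ]
  conv_rhs => rw [← hf σ]
  rw [coeff_rename_mapDomain _ σ.injective]

noncomputable def mk {m n : ℕ} (c : (Fin n → Fin (m+1)) → ℂ) : MvPolynomial (Fin n) ℂ :=
  ∑ b, monomial (toF b) (c b)

lemma coeff_mk {m n : ℕ} (c : (Fin n → Fin (m+1)) → ℂ) (b : Fin n → Fin (m+1)) :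
    coeff (toF b) (mk c) = c b := by
  rw [mk, coeff_sum, Finset.sum_eq_single b]
  · simp
  · intro b' _ hb
    rw [coeff_monomial, if_neg (fun h => hb (toF_inj h))]
  · simp

lemma eval_mk {m n : ℕ} (L : Rg m →ₗ[ℂ] ℂ) (y : Fin n → ℂ) :
    eval y (mk (fun b => L (monomial (cnt b) 1))) = L (∏ j, EE m (y j)) := by
  rw [mk, prod_EE, map_sum, map_sum]
  apply Finset.sum_congr rfl
  intro b _
  rw [eval_monomial, map_smul, Finsupp.prod_fintype _ _ (by simp), smul_eq_mul, mul_comm]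
  rfl

lemma mk_homog {m n : ℕ} (c : (Fin n → Fin (m+1)) → ℂ) (h : ∀ b, wt (cnt b) ≠ m → c b = 0) :
    (mk c).IsHomogeneous m := by
  apply IsHomogeneous.sum
  intro b _
  by_cases hb : wt (cnt b) = m
  · exact isHomogeneous_monomial _ ((toF_degree b).trans hb)
  · rw [h b hb, map_zero]
    exact isHomogeneous_zero _ _ _

lemma homog_ext {m n : ℕ} {f g : MvPolynomial (Fin n) ℂ} (hf : f.IsHomogeneous m)
    (hg : g.IsHomogeneous m)
    (h : ∀ b : Fin n → Fin (m+1), wt (cnt b) = m → coeff (toF b) f = coeff (toF b) g) : f = g := by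
  ext d
  by_cases hd : d.degree = m
  · obtain ⟨b, rfl⟩ := exists_toF d hd
    exact h b ((toF_degree b).symm.trans hd)
  · rw [hf.coeff_eq_zero hd, hg.coeff_eq_zero hd]

lemma mk_symm {m n : ℕ} (c : (Fin n → Fin (m+1)) → ℂ)
    (h : ∀ b, wt (cnt b) ≠ m → c b = 0) (hc : ∀ b b', cnt b = cnt b' → c b = c b') :
    (mk c).IsSymmetric := by
  intro σ
  apply homog_ext (m := m) ((mk_homog c h).rename_isHomogeneous) (mk_homog c h)
  intro b _
  conv_lhs => rw [← toF_comp b σ]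
  rw [coeff_rename_mapDomain _ σ.injective, coeff_mk, coeff_mk]
  exact hc _ _ (cnt_comp b σ)

def Fsub (k : ℕ) (t : ℂ) (n m : ℕ) : Submodule ℂ (MvPolynomial (Fin n) ℂ) where
  carrier := {f | f.IsSymmetric ∧
          (∀ (x : ℂ) (y : Fin n → ℂ),
            MvPolynomial.eval
              (fun j : Fin n => if (j : ℕ) ≤ k then t ^ (j : ℕ) * x else y j) f = 0) ∧
          f.IsHomogeneous m}
  zero_mem' := ⟨IsSymmetric.zero, by simp, isHomogeneous_zero _ _ _⟩
  add_mem' := by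
    rintro f g ⟨h1, h2, h3⟩ ⟨k1, k2, k3⟩
    exact ⟨h1.add k1, fun x y => by rw [map_add, h2, k2, add_zero], h3.add k3⟩
  smul_mem' := by
    rintro c f ⟨h1, h2, h3⟩
    exact ⟨h1.smul c, fun x y => by rw [smul_eval, h2, mul_zero],
      (homogeneousSubmodule _ _ m).smul_mem c h3⟩

abbrev Adm (k n m : ℕ) := {a : Ix m // dg a = n ∧ wt a = m ∧ ∀ i, a i ≤ k}
abbrev All (n m : ℕ) := {a : Ix m // dg a = n ∧ wt a = m}

instance (n m : ℕ) : Finite (All n m) := by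
  have : ∀ a : All n m, ∀ i, a.1 i < n + 1 := fun a i => by
    have := a.2.1
    rw [dg_eq] at this
    have := Finset.single_le_sum (f := fun j => a.1 j) (fun _ _ => Nat.zero_le _) (Finset.mem_univ i)
    omega
  apply Finite.of_injective (β := Fin (m+1) → Fin (n+1)) (fun a i => ⟨a.1 i, this a i⟩)
  intro a b h
  apply Subtype.ext
  ext i
  exact congrArg Fin.val (congrFun h i)

instance (k n m : ℕ) : Finite (Adm k n m) :=
  Finite.of_injective (β := All n m) (fun a => ⟨a.1, a.2.1, a.2.2.1⟩) (fun a b h => by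
    apply Subtype.ext
    exact congrArg (fun z : All n m => z.1) h)

lemma li_BB (m k n : ℕ) (t : ℂ) (ht : t ≠ 0) :
    LinearIndependent ℂ (fun a : All n m => BB m k t a.1) := by
  have := Fintype.ofFinite (All n m)
  have li : LinearIndependent ℂ (fun a : All n m => (monomial a.1 (1:ℂ) : Rg m)) := by
    have := (basisMonomials (Fin (m+1)) ℂ).linearIndependent.comp
      (fun a : All n m => a.1) Subtype.val_injective
    rw [coe_basisMonomials] at this
    exact this
  rw [linearIndependent_iff_card_eq_finrank_span] at li ⊢
  rw [li]
  have hs : BB m k t '' {a | dg a = n ∧ wt a = m} = Set.range (fun a : All n m => BB m k t a.1) := by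
    ext p
    constructor
    · rintro ⟨a, ha, rfl⟩; exact ⟨⟨a, ha⟩, rfl⟩
    · rintro ⟨a, rfl⟩; exact ⟨a.1, a.2, rfl⟩
  have e : Submodule.span ℂ (Set.range (fun a : All n m => (monomial a.1 (1:ℂ) : Rg m))) =
    Submodule.span ℂ (Set.range (fun a : All n m => BB m k t a.1)) := by
    apply le_antisymm
    · rw [Submodule.span_le]
      rintro _ ⟨a, rfl⟩
      rw [← hs]
      exact mono_mem_BB m k t ht n m a.1 a.2.1 a.2.2
    · rw [Submodule.span_le]
      rintro _ ⟨a, rfl⟩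
      have := (PP_BB m k t ht a.1).mem
      refine Submodule.span_mono ?_ this
      rintro _ ⟨a', ⟨h1, h2, _⟩, rfl⟩
      exact ⟨⟨a', h1.trans a.2.1, h2.trans a.2.2⟩, rfl⟩
  unfold Set.finrank
  rw [e]

lemma exists_L (m k n : ℕ) (t : ℂ) (ht : t ≠ 0) (u : Adm k n m → ℂ) :
    ∃ L : Rg m →ₗ[ℂ] ℂ, (∀ a : Adm k n m, L (monomial a.1 1) = u a) ∧
      (∀ a, ¬ (dg a = n ∧ wt a = m) → L (monomial a 1) = 0) ∧
      (∀ a : Ix m, (¬ ∀ i, a i ≤ k) → L (BB m k t a) = 0) := by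
  classical
  have li := li_BB m k n t ht
  obtain ⟨L', hL'⟩ := LinearMap.exists_extend ((Module.Basis.span li).constr ℂ
    (fun a : All n m => if h : ∀ i, a.1 i ≤ k then u ⟨a.1, a.2.1, a.2.2, h⟩ else 0))
  have hB : ∀ a : All n m, L' (BB m k t a.1) =
      if h : ∀ i, a.1 i ≤ k then u ⟨a.1, a.2.1, a.2.2, h⟩ else 0 := by
    intro a
    have := LinearMap.congr_fun hL' (Module.Basis.span li a)
    rw [Module.Basis.constr_basis] at this
    rw [← this]
    simp [Module.Basis.span_apply]
  let L : Rg m →ₗ[ℂ] ℂ := (basisMonomials (Fin (m+1)) ℂ).constr ℂ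
    (fun a => if dg a = n ∧ wt a = m then L' (monomial a 1) else 0)
  have hL : ∀ a, L (monomial a 1) = if dg a = n ∧ wt a = m then L' (monomial a 1) else 0 := by
    intro a
    have := (basisMonomials (Fin (m+1)) ℂ).constr_basis ℂ
      (fun a => if dg a = n ∧ wt a = m then L' (monomial a 1) else 0) a
    rwa [coe_basisMonomials] at this
  have hLL : ∀ p ∈ T m n m 0, L p = L' p := by
    intro p hp
    have : T m n m 0 ≤ LinearMap.ker (L - L') := by
      unfold T
      rw [Submodule.span_le]
      rintro _ ⟨a, ⟨h1, h2, _⟩, rfl⟩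
      simp [hL, h1, h2]
    have := this hp
    rw [LinearMap.mem_ker, LinearMap.sub_apply, sub_eq_zero] at this
    exact this
  refine ⟨L, ?_, ?_, ?_⟩
  · intro a
    rw [hL, if_pos ⟨a.2.1, a.2.2.1⟩, ← BB_adm m k t a.1 a.2.2.2]
    have := hB ⟨a.1, a.2.1, a.2.2.1⟩
    rw [dif_pos a.2.2.2] at this
    exact this
  · intro a ha
    rw [hL, if_neg ha]
  · intro a ha
    have hm := T_mono (Nat.zero_le _) (PP_BB m k t ht a).mem
    by_cases h : dg a = n ∧ wt a = m
    · rw [h.1, h.2] at hm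
      rw [hLL _ hm]
      have := hB ⟨a, h⟩
      rw [dif_neg ha] at this
      exact this
    · have : T m (dg a) (wt a) 0 ≤ LinearMap.ker L := by
        unfold T
        rw [Submodule.span_le]
        rintro _ ⟨a', ⟨h1, h2, _⟩, rfl⟩
        rw [SetLike.mem_coe, LinearMap.mem_ker, hL, if_neg]
        rwa [h1, h2]
      exact this hm

noncomputable def sec {k n m : ℕ} (a : Adm k n m) : Fin n → Fin (m+1) :=
  (cnt_surj a.1 a.2.1).choose

lemma cnt_sec {k n m : ℕ} (a : Adm k n m) : cnt (sec a) = a.1 := (cnt_surj a.1 a.2.1).choose_spec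

noncomputable def Th (k : ℕ) (t : ℂ) (n m : ℕ) : Fsub k t n m →ₗ[ℂ] (Adm k n m → ℂ) where
  toFun f a := coeff (toF (sec a)) f.1
  map_add' f g := by funext a; simp
  map_smul' c f := by funext a; simp

lemma Th_surj (k : ℕ) (t : ℂ) (ht : IsPrimitiveRoot t (k+1)) (r m : ℕ) :
    Function.Surjective (Th k t (k+1+r) m) := by
  intro u
  have ht0 : t ≠ 0 := ht.ne_zero (Nat.succ_ne_zero k)
  obtain ⟨L, h1, h2, h3⟩ := exists_L m k (k+1+r) t ht0 u
  have hc : ∀ b : Fin (k+1+r) → Fin (m+1), wt (cnt b) ≠ m → L (monomial (cnt b) 1) = 0 :=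
    fun b hb => h2 _ (fun h => hb h.2)
  refine ⟨⟨mk (fun b => L (monomial (cnt b) 1)), ?_, ?_, ?_⟩, ?_⟩
  · exact mk_symm _ hc (fun b b' h => by rw [h])
  · intro x y
    rw [eval_mk]
    refine keyB m k r t ht L (fun s a ha => ?_) x y
    have := mono_mem_BB m k t ht0 _ _ a rfl rfl
    have hle : Submodule.span ℂ (BB m k t '' {a' | dg a' = dg a ∧ wt a' = wt a}) ≤
        LinearMap.ker (L ∘ₗ LinearMap.mulLeft ℂ (gg m k t s)) := by
      rw [Submodule.span_le]
      rintro _ ⟨a', _, rfl⟩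
      rw [SetLike.mem_coe, LinearMap.mem_ker, LinearMap.comp_apply, LinearMap.mulLeft_apply,
        ← BB_add]
      apply h3
      intro h
      have := h s
      simp at this
      omega
    exact hle this
  · exact mk_homog _ hc
  · funext a
    change coeff (toF (sec a)) (mk _) = _
    rw [coeff_mk, cnt_sec, h1]

lemma Th_inj (k : ℕ) (t : ℂ) (ht : IsPrimitiveRoot t (k+1)) (r m : ℕ) :
    Function.Injective (Th k t (k+1+r) m) := by
  classical
  have ht0 : t ≠ 0 := ht.ne_zero (Nat.succ_ne_zero k)
  rw [injective_iff_map_eq_zero]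
  rintro ⟨f, hs, hv, hh⟩ h0
  let L : Rg m →ₗ[ℂ] ℂ := (basisMonomials (Fin (m+1)) ℂ).constr ℂ
    (fun a => if h : ∃ b : Fin (k+1+r) → Fin (m+1), cnt b = a then coeff (toF h.choose) f else 0)
  have hL : ∀ b : Fin (k+1+r) → Fin (m+1), L (monomial (cnt b) 1) = coeff (toF b) f := by
    intro b
    have := (basisMonomials (Fin (m+1)) ℂ).constr_basis ℂ
      (fun a => if h : ∃ b : Fin (k+1+r) → Fin (m+1), cnt b = a then coeff (toF h.choose) f else 0)
      (cnt b)
    rw [coe_basisMonomials] at this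
    have hex : ∃ b' : Fin (k+1+r) → Fin (m+1), cnt b' = cnt b := ⟨b, rfl⟩
    rw [dif_pos hex] at this
    refine this.trans ?_
    exact coeff_sym hs _ _ hex.choose_spec
  have hc : ∀ b : Fin (k+1+r) → Fin (m+1), wt (cnt b) ≠ m → L (monomial (cnt b) 1) = 0 := by
    intro b hb
    rw [hL]
    exact hh.coeff_eq_zero (by rwa [toF_degree])
  have hf : f = mk (fun b => L (monomial (cnt b) 1)) := by
    apply homog_ext hh (mk_homog _ hc)
    intro b _
    rw [coeff_mk, hL]
  have hA := keyA m k r t L (fun x y => by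
    rw [← eval_mk, ← hf]; exact hv x y)
  have hB : ∀ a : Ix m, dg a = k+1+r → wt a = m → L (BB m k t a) = 0 := by
    intro a h1 h2
    by_cases ha : ∀ i, a i ≤ k
    · rw [BB_adm m k t a ha]
      have e1 := hL (sec (⟨a, h1, h2, ha⟩ : Adm k (k+1+r) m))
      have e2 := congrFun h0 (⟨a, h1, h2, ha⟩ : Adm k (k+1+r) m)
      have e3 := cnt_sec (⟨a, h1, h2, ha⟩ : Adm k (k+1+r) m)
      rw [e3] at e1
      exact e1.trans e2
    · push Not at ha
      obtain ⟨s, hs⟩ := ha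
      obtain ⟨a', rfl⟩ : ∃ a', a = a' + Finsupp.single s (k+1) := by
        refine ⟨a - Finsupp.single s (k+1), ?_⟩
        rw [tsub_add_cancel_of_le]
        rw [Finsupp.single_le_iff]
        omega
      rw [BB_add]
      have hd : dg a' = r := by
        rw [map_add, dg, fw_single] at h1
        change fw _ a' = r
        omega
      have hm := (PP_BB m k t ht0 a').mem
      have hle : T m (dg a') (wt a') (qd a') ≤
          LinearMap.ker (L ∘ₗ LinearMap.mulLeft ℂ (gg m k t s)) := by
        unfold T
        rw [Submodule.span_le]
        rintro _ ⟨a'', ⟨k1, _, _⟩, rfl⟩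
        exact hA s a'' (k1.trans hd)
      exact hle hm
  apply Subtype.ext
  change f = 0
  apply homog_ext hh (isHomogeneous_zero _ _ m)
  intro b hb
  rw [← hL, coeff_zero]
  have hm := mono_mem_BB m k t ht0 _ _ (cnt b) (dg_cnt b) hb
  have hle : Submodule.span ℂ (BB m k t '' {a' | dg a' = k+1+r ∧ wt a' = m}) ≤
      LinearMap.ker L := by
    rw [Submodule.span_le]
    rintro _ ⟨a', ⟨k1, k2⟩, rfl⟩
    exact hB a' k1 k2
  exact hle hm

lemma card_Adm (k n m : ℕ) : Nat.card {l : Fin n → ℕ | Antitone l ∧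
        (∀ i : ℕ, (Finset.univ.filter fun a : Fin n => l a = i).card ≤ k) ∧
        ∑ a, l a = m} = Nat.card (Adm k n m) := by
  have hlt : ∀ l : Fin n → ℕ, ∑ a, l a = m → ∀ j, l j < m + 1 := by
    intro l hl j
    rw [Nat.lt_succ_iff, ← hl]
    exact Finset.single_le_sum (f := fun j => l j) (fun _ _ => Nat.zero_le _) (Finset.mem_univ j)
  let φ : {l : Fin n → ℕ | Antitone l ∧
        (∀ i : ℕ, (Finset.univ.filter fun a : Fin n => l a = i).card ≤ k) ∧
        ∑ a, l a = m} → Adm k n m := fun l =>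
    ⟨cnt (fun j => ⟨l.1 j, hlt l.1 l.2.2.2 j⟩), dg_cnt _, by rw [wt_cnt]; exact l.2.2.2, by
      intro i
      rw [cnt_apply]
      have := l.2.2.1 i
      simpa only [Fin.ext_iff] using this⟩
  apply Nat.card_eq_of_bijective φ
  constructor
  · rintro ⟨l, h1, h2, h3⟩ ⟨l', h1', h2', h3'⟩ h
    obtain ⟨σ, hσ⟩ := cnt_perm _ _ (congrArg Subtype.val h)
    apply Subtype.ext
    change l = l'
    have e : l = l' ∘ σ := by
      funext j
      exact congrArg Fin.val (congrFun hσ j)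
    have := Tuple.unique_antitone (f := l') (σ := σ) (τ := 1) (e ▸ h1) (by simpa using h1')
    rw [e, this]
    rfl
  · intro a
    obtain ⟨b, hb⟩ := cnt_surj a.1 a.2.1
    let τ : Equiv.Perm (Fin n) := Fin.revPerm.trans (Tuple.sort b)
    have hτ : Antitone (b ∘ τ) := by
      intro i j hij
      exact Tuple.monotone_sort b (Fin.rev_le_rev.2 hij)
    have hcb : cnt (b ∘ τ) = a.1 := (cnt_comp b τ).trans hb
    refine ⟨⟨fun j => (b (τ j) : ℕ), hτ, ?_, ?_⟩, ?_⟩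
    · intro i
      by_cases hi : i < m + 1
      · have := a.2.2.2 ⟨i, hi⟩
        rw [← hcb, cnt_apply] at this
        simpa only [Fin.ext_iff, Function.comp] using this
      · rw [Finset.filter_false_of_mem]
        · simp
        · intro j _
          have := (b (τ j)).2
          change (b (τ j) : ℕ) ≠ i
          omega
    · have := a.2.2.1
      rw [← hcb, wt_cnt] at this
      exact this
    · apply Subtype.ext
      exact hcb

end FK

/-- for every `m ≥ 0` and `n ≥ k+1`, the dimension of the space of
polynomials in `F_n^{(k,2)}` that are homogeneous of degree `m` equals the number of
admissible partitions `λ ∈ π_n` of weight `m` (admissible: every value occurs at most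
`k` times among the parts). -/
theorem dim_Fk2_homogeneous_eq_card_admissible
    (k : ℕ) (hk : 0 < k) (t : ℂ) (ht : IsPrimitiveRoot t (k + 1))
    (n m : ℕ) (hn : k + 1 ≤ n) :
    Module.finrank ℂ
      ↥(Submodule.span ℂ {f : MvPolynomial (Fin n) ℂ |
          f.IsSymmetric ∧
          (∀ (x : ℂ) (y : Fin n → ℂ),
            MvPolynomial.eval
              (fun j : Fin n => if (j : ℕ) ≤ k then t ^ (j : ℕ) * x else y j) f = 0) ∧
          f.IsHomogeneous m})
    = Nat.card {l : Fin n → ℕ | Antitone l ∧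
        (∀ i : ℕ, (Finset.univ.filter fun a : Fin n => l a = i).card ≤ k) ∧
        ∑ a, l a = m} := by
  have e : Submodule.span ℂ {f : MvPolynomial (Fin n) ℂ |
          f.IsSymmetric ∧
          (∀ (x : ℂ) (y : Fin n → ℂ),
            MvPolynomial.eval
              (fun j : Fin n => if (j : ℕ) ≤ k then t ^ (j : ℕ) * x else y j) f = 0) ∧
          f.IsHomogeneous m} = FK.Fsub k t n m := Submodule.span_eq (FK.Fsub k t n m)
  rw [e, FK.card_Adm]
  obtain ⟨r, rfl⟩ := Nat.exists_eq_add_of_le hn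
  have := Fintype.ofFinite (FK.Adm k (k+1+r) m)
  rw [(LinearEquiv.ofBijective (FK.Th k t (k+1+r) m)
    ⟨FK.Th_inj k t ht r m, FK.Th_surj k t ht r m⟩).finrank_eq,
    Module.finrank_fintype_fun_eq_card, Nat.card_eq_fintype_card]
end

section
/- In the quotient vector space E_n^{(k,2)} = E_n/(J·E_{n−k−1}), the images {ē_λ} of the monomials e_λ, where λ ranges over all admissible partitions in π_n, span E_n^{(k,2)}. -/
open MvPolynomial

/-- In `E = ℂ[e_0, e_1, e_2, …]` (realized as `MvPolynomial ℕ ℂ`, variable `X i = e_i`),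
the monomial `e_λ = e_{λ_1}⋯e_{λ_m}` attached to `λ : Fin m → ℕ`. -/
noncomputable def eMon (m : ℕ) (l : Fin m → ℕ) : MvPolynomial ℕ ℂ :=
  ∏ i, MvPolynomial.X (l i)

/-- `E_m ⊂ E`: the linear span of the monomials `e_λ`, `λ ∈ π_m`. -/
noncomputable def Esub (m : ℕ) : Submodule ℂ (MvPolynomial ℕ ℂ) :=
  Submodule.span ℂ {p | ∃ l : Fin m → ℕ, Antitone l ∧ p = eMon m l}

/-- The coefficient of `z^m` in `∏_{i=0}^{k} e(t^i z)` where `e(z) = Σ_{i≥0} e_i z^i`: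
`c_m = Σ_{a_0+⋯+a_k=m} (∏_i t^{i·a_i}) e_{a_0}⋯e_{a_k}`. -/
noncomputable def wheelCoeff (k : ℕ) (t : ℂ) (m : ℕ) : MvPolynomial ℕ ℂ :=
  ∑ a ∈ Finset.Nat.antidiagonalTuple (k + 1) m,
    (∏ i : Fin (k + 1), t ^ ((i : ℕ) * a i)) • ∏ i, MvPolynomial.X (a i)

/-- `J·E_{n-k-1}`: the span of products of a coefficient of `∏_{i=0}^k e(t^i z)`
with a monomial `e_μ`, `μ ∈ π_{n-k-1}`. -/
noncomputable def JEsub (k n : ℕ) (t : ℂ) : Submodule ℂ (MvPolynomial ℕ ℂ) :=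
  Submodule.span ℂ
    {p | ∃ (m : ℕ) (l : Fin (n - k - 1) → ℕ), Antitone l ∧
      p = wheelCoeff k t m * eMon (n - k - 1) l}


/-- The monomial attached to a multiset of indices. -/
noncomputable def msMon (s : Multiset ℕ) : MvPolynomial ℕ ℂ :=
  (s.map (fun i => (MvPolynomial.X i : MvPolynomial ℕ ℂ))).prod

theorem eMon_eq_msMon (m : ℕ) (l : Fin m → ℕ) :
    eMon m l = msMon (Finset.univ.val.map l) := by
  simp [eMon, msMon, Finset.prod, Multiset.map_map, Function.comp_def]

theorem msMon_add (s u : Multiset ℕ) : msMon (s + u) = msMon s * msMon u := by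
  simp [msMon]

theorem exists_antitone_of_card (m : ℕ) (s : Multiset ℕ) (hs : s.card = m) :
    ∃ l : Fin m → ℕ, Antitone l ∧ Finset.univ.val.map l = s := by
  subst hs
  have hlen : (s.sort (· ≥ ·)).length = s.card := Multiset.length_sort _
  refine ⟨fun i => (s.sort (· ≥ ·)).get (i.cast hlen.symm), ?_, ?_⟩
  · intro i j hij
    have hp : (s.sort (· ≥ ·)).Pairwise (· ≥ ·) := Multiset.pairwise_sort s (· ≥ ·)
    rcases hij.eq_or_lt with h | h
    · subst h; exact le_rfl
    · exact List.pairwise_iff_get.1 hp _ _ (by simpa using h)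
  · conv_rhs => rw [← Multiset.sort_eq s (· ≥ ·)]
    rw [Fin.univ_val_map]
    congr 1
    apply List.ext_get
    · simp
    · intro i h1 h2
      simp

theorem sq_sum_gt (k r : ℕ) (a : Fin (k + 1) → ℕ) (hsum : ∑ i, a i = (k + 1) * r)
    (hne : a ≠ fun _ => r) : (k + 1) * r ^ 2 < ∑ i, a i ^ 2 := by
  have h : 0 < ∑ i, ((a i : ℤ) - r) ^ 2 := by
    obtain ⟨j, hj⟩ := Function.ne_iff.1 hne
    apply Finset.sum_pos' (fun i _ => sq_nonneg _)
    refine ⟨j, Finset.mem_univ _, ?_⟩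
    have : (a j : ℤ) - r ≠ 0 := by
      intro h; apply hj; omega
    positivity
  have h2 : ∑ i, ((a i : ℤ) - r) ^ 2
      = ∑ i, (a i : ℤ) ^ 2 - 2 * r * ∑ i, (a i : ℤ) + (k + 1) * r ^ 2 := by
    simp only [sub_sq, Finset.sum_add_distrib, Finset.sum_sub_distrib, Finset.mul_sum]
    congr 1
    · congr 1
      exact Finset.sum_congr rfl fun i _ => by ring
    · simp
  have h3 : (∑ i, (a i : ℤ)) = (k + 1) * r := by exact_mod_cast hsum
  rw [h2, h3] at h
  zify
  nlinarith

/-- Sum of squares. -/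
def sqs (s : Multiset ℕ) : ℕ := (s.map (fun i => i ^ 2)).sum

theorem sqs_le (s : Multiset ℕ) : sqs s ≤ s.sum ^ 2 := by
  induction s using Multiset.induction with
  | empty => simp [sqs]
  | cons a s ih =>
    simp only [sqs, Multiset.map_cons, Multiset.sum_cons] at *
    nlinarith [Nat.zero_le (a * s.sum)]

theorem sqs_add (s u : Multiset ℕ) : sqs (s + u) = sqs s + sqs u := by simp [sqs]

theorem msMon_mem (k n : ℕ) (t : ℂ) (ht : t ≠ 0) (hn : k + 1 ≤ n) (N : ℕ) :
    ∀ s : Multiset ℕ, s.card = n → s.sum ^ 2 - sqs s = N →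
      msMon s ∈ Submodule.span ℂ {p | ∃ u : Multiset ℕ, u.card = n ∧
        (∀ i, u.count i ≤ k) ∧ p = msMon u} ⊔ JEsub k n t := by
  induction N using Nat.strong_induction_on with
  | _ N ih =>
  intro s hs hN
  by_cases hadm : ∀ i, s.count i ≤ k
  · exact Submodule.mem_sup_left (Submodule.subset_span ⟨s, hs, hadm, rfl⟩)
  push Not at hadm
  obtain ⟨r, hr⟩ := hadm
  have hle : Multiset.replicate (k + 1) r ≤ s := Multiset.le_count_iff_replicate_le.1 hr
  obtain ⟨u, rfl⟩ := Multiset.le_iff_exists_add.1 hle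
  have hu : u.card = n - k - 1 := by simp at hs; omega
  obtain ⟨l, hl, hlu⟩ := exists_antitone_of_card _ u hu
  set M := Submodule.span ℂ {p | ∃ u : Multiset ℕ, u.card = n ∧
        (∀ i, u.count i ≤ k) ∧ p = msMon u} ⊔ JEsub k n t with hM
  have hJ : wheelCoeff k t ((k + 1) * r) * msMon u ∈ M := by
    apply Submodule.mem_sup_right
    apply Submodule.subset_span
    exact ⟨_, l, hl, by rw [eMon_eq_msMon, hlu]⟩
  have hmem : (fun _ => r) ∈ Finset.Nat.antidiagonalTuple (k + 1) ((k + 1) * r) := by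
    simp [Finset.Nat.mem_antidiagonalTuple]
  rw [wheelCoeff, ← Finset.add_sum_erase _ _ hmem, add_mul, Finset.sum_mul] at hJ
  have hrest : ∑ a ∈ (Finset.Nat.antidiagonalTuple (k + 1) ((k + 1) * r)).erase (fun _ => r),
      ((∏ i : Fin (k + 1), t ^ ((i : ℕ) * a i)) • ∏ i, (MvPolynomial.X (a i) : MvPolynomial ℕ ℂ))
        * msMon u ∈ M := by
    apply Submodule.sum_mem
    intro a ha
    obtain ⟨hne, ha⟩ := Finset.mem_erase.1 ha
    rw [Finset.Nat.mem_antidiagonalTuple] at ha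
    rw [smul_mul_assoc]
    apply Submodule.smul_mem
    have e : (∏ i, (MvPolynomial.X (a i) : MvPolynomial ℕ ℂ)) = msMon (Finset.univ.val.map a) :=
      eMon_eq_msMon _ a
    rw [e, ← msMon_add]
    have hsq := sq_sum_gt k r a ha hne
    have q1 : sqs (Finset.univ.val.map a) = ∑ i, a i ^ 2 := by
      simp [sqs, Finset.sum, Multiset.map_map, Function.comp_def]
    have q2 : sqs (Multiset.replicate (k + 1) r) = (k + 1) * r ^ 2 := by
      simp [sqs]; ring
    have q3 : (Finset.univ.val.map a).sum = (k + 1) * r := ha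
    have q4 : (Multiset.replicate (k + 1) r).sum = (k + 1) * r := by simp; ring
    have b := sqs_le (Finset.univ.val.map a + u)
    refine ih _ ?_ _ ?_ rfl
    · rw [Multiset.sum_add, sqs_add, q1, q3] at *
      rw [q4, q2] at hN
      omega
    · simp at hs ⊢
      omega
  have h1 := (Submodule.add_mem_iff_left M hrest).1 hJ
  rw [smul_mul_assoc] at h1
  have hc : (∏ i : Fin (k + 1), t ^ ((i : ℕ) * r)) ≠ 0 :=
    Finset.prod_ne_zero_iff.2 fun i _ => pow_ne_zero _ ht
  have h2 := (Submodule.smul_mem_iff M hc).1 h1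
  rw [msMon_add]
  convert h2 using 2
  simp [msMon]
  ring

/-- in the quotient `E_n^{(k,2)} = E_n/(J·E_{n-k-1})`, the images of the
monomials `e_λ` with `λ ∈ π_n` admissible (every value occurring at most `k` times)
span the quotient. -/
theorem admissible_eMon_span_quotient
    (k n : ℕ) (hk : 0 < k) (t : ℂ) (ht : IsPrimitiveRoot t (k + 1)) (hn : k + 1 ≤ n) :
    Submodule.span ℂ
      (Set.range fun l : {l : Fin n → ℕ // Antitone l ∧
          ∀ i : ℕ, (Finset.univ.filter fun a : Fin n => l a = i).card ≤ k} =>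
        (Submodule.Quotient.mk
          (⟨eMon n l.1, Submodule.subset_span ⟨l.1, l.2.1, rfl⟩⟩ : Esub n) :
          ↥(Esub n) ⧸ (JEsub k n t).comap (Esub n).subtype)) = ⊤ := by
  have ht0 : t ≠ 0 := ht.ne_zero (by omega)
  set W := Submodule.span ℂ
      (Set.range fun l : {l : Fin n → ℕ // Antitone l ∧
          ∀ i : ℕ, (Finset.univ.filter fun a : Fin n => l a = i).card ≤ k} =>
        (Submodule.Quotient.mk
          (⟨eMon n l.1, Submodule.subset_span ⟨l.1, l.2.1, rfl⟩⟩ : Esub n) :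
          ↥(Esub n) ⧸ (JEsub k n t).comap (Esub n).subtype)) with hW
  have hA : Submodule.span ℂ {p | ∃ u : Multiset ℕ, u.card = n ∧
        (∀ i, u.count i ≤ k) ∧ p = msMon u} ≤
      (W.comap ((JEsub k n t).comap (Esub n).subtype).mkQ).map (Esub n).subtype := by
    rw [Submodule.span_le]
    rintro p ⟨u, hu, hadm, rfl⟩
    obtain ⟨l, hl, hlu⟩ := exists_antitone_of_card n u hu
    refine ⟨⟨eMon n l, Submodule.subset_span ⟨l, hl, rfl⟩⟩, ?_, ?_⟩
    · apply Submodule.subset_span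
      refine ⟨⟨l, hl, fun i => ?_⟩, rfl⟩
      have := hadm i
      rw [← hlu, Multiset.count_map] at this
      simpa [Finset.card, Finset.filter, eq_comm] using this
    · simp [eMon_eq_msMon, hlu]
  have hE : Esub n ≤ Submodule.span ℂ {p | ∃ u : Multiset ℕ, u.card = n ∧
        (∀ i, u.count i ≤ k) ∧ p = msMon u} ⊔ JEsub k n t := by
    rw [Esub, Submodule.span_le]
    rintro p ⟨l, hl, rfl⟩
    rw [eMon_eq_msMon]
    exact msMon_mem k n t ht0 hn _ _ (by simp) rfl
  rw [eq_top_iff]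
  rintro x -
  obtain ⟨p, rfl⟩ := Submodule.Quotient.mk_surjective _ x
  obtain ⟨a, ha, j, hj, hp⟩ := Submodule.mem_sup.1 (hE p.2)
  obtain ⟨a', ha', rfl⟩ := hA ha
  have : (Submodule.Quotient.mk p : ↥(Esub n) ⧸ (JEsub k n t).comap (Esub n).subtype)
      = Submodule.Quotient.mk a' := by
    rw [Submodule.Quotient.eq, Submodule.mem_comap]
    have : (Esub n).subtype (p - a') = j := by
      rw [map_sub, sub_eq_iff_eq_add, add_comm]; exact hp.symm
    rw [this]; exact hj
  rw [this]
  exact ha'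
end

section
/- In the quotient vector space E_n^{(k,2)} = E_n/(J·E_{n−k−1}), the images {ē_λ} of the monomials e_λ, where λ ranges over all admissible partitions in π_n, form a basis of E_n^{(k,2)} (i.e., they are linearly independent and span). -/
open MvPolynomial

noncomputable section Helpers

abbrev dg : (ℕ →₀ ℕ) →+ ℕ := Finsupp.weight (fun _ : ℕ => (1:ℕ))
abbrev wt : (ℕ →₀ ℕ) →+ ℕ := Finsupp.weight (fun i : ℕ => i)
abbrev qq : (ℕ →₀ ℕ) →+ ℕ := Finsupp.weight (fun i : ℕ => i ^ 2)

/-- `p` has leading monomial `m`. -/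
def Lead (p : MvPolynomial ℕ ℂ) (m : ℕ →₀ ℕ) : Prop :=
  ∃ u : ℂ, u ≠ 0 ∧ ∃ r : MvPolynomial ℕ ℂ, p = monomial m u + r ∧
    ∀ x ∈ r.support, dg x = dg m ∧ wt x = wt m ∧ qq m < qq x

lemma qq_le (m : ℕ →₀ ℕ) : qq m ≤ wt m * wt m := by
  induction m using Finsupp.induction_linear with
  | zero => simp
  | add f g hf hg => rw [map_add, map_add]; nlinarith
  | single a b =>
    simp only [Finsupp.weight_single, smul_eq_mul]
    rcases Nat.eq_zero_or_pos b with h | h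
    · simp [h]
    · nlinarith [Nat.zero_le (b * a^2), Nat.mul_le_mul h (le_refl (b * a^2))]

lemma lead_monomial (m : ℕ →₀ ℕ) : Lead (monomial m 1) m :=
  ⟨1, one_ne_zero, 0, by simp, by simp⟩

lemma Lead.mul {p q : MvPolynomial ℕ ℂ} {m n : ℕ →₀ ℕ} (hp : Lead p m) (hq : Lead q n) :
    Lead (p * q) (m + n) := by
  obtain ⟨u, hu, r, rfl, hr⟩ := hp
  obtain ⟨v, hv, s, rfl, hs⟩ := hq
  refine ⟨u * v, mul_ne_zero hu hv, monomial m u * s + r * monomial n v + r * s, ?_, ?_⟩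
  · rw [← monomial_mul]; ring
  · intro x hx
    have h1 : ∀ y ∈ (monomial m u).support, y = m := by
      intro y hy; simpa using support_monomial_subset hy
    have h2 : ∀ y ∈ (monomial n v).support, y = n := by
      intro y hy; simpa using support_monomial_subset hy
    simp only [map_add]
    rcases Finset.mem_union.1 (support_add hx) with hx | hx
    · rcases Finset.mem_union.1 (support_add hx) with hx | hx
      · obtain ⟨a, ha, b, hb, rfl⟩ := Finset.mem_add.1 (support_mul _ _ hx)
        rw [h1 a ha]
        have := hs b hb
        simp only [map_add]; omega
      · obtain ⟨a, ha, b, hb, rfl⟩ := Finset.mem_add.1 (support_mul _ _ hx)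
        rw [h2 b hb]
        have := hr a ha
        simp only [map_add]; omega
    · obtain ⟨a, ha, b, hb, rfl⟩ := Finset.mem_add.1 (support_mul _ _ hx)
      have := hr a ha
      have := hs b hb
      simp only [map_add]; omega

lemma lead_one : Lead 1 0 := lead_monomial 0

lemma Lead.prod {ι : Type*} (s : Finset ι) (p : ι → MvPolynomial ℕ ℂ) (m : ι → ℕ →₀ ℕ)
    (h : ∀ i, Lead (p i) (m i)) : Lead (∏ i ∈ s, p i) (∑ i ∈ s, m i) := by
  classical
  induction s using Finset.induction_on with
  | empty => simpa using lead_one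
  | insert a s ha ih => rw [Finset.prod_insert ha, Finset.sum_insert ha]; exact (h a).mul ih

lemma Lead.pow {p : MvPolynomial ℕ ℂ} {m : ℕ →₀ ℕ} (h : Lead p m) (c : ℕ) :
    Lead (p ^ c) (c • m) := by
  simpa using Lead.prod (Finset.range c) (fun _ => p) (fun _ => m) (fun _ => h)

lemma Lead.coeff_ne {p : MvPolynomial ℕ ℂ} {m : ℕ →₀ ℕ} (h : Lead p m) : coeff m p ≠ 0 := by
  obtain ⟨u, hu, r, rfl, hr⟩ := h
  have : coeff m r = 0 := by
    by_contra h
    have := hr m (mem_support_iff.2 h)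
    omega
  simpa [this] using hu

lemma Lead.coeff_eq {p : MvPolynomial ℕ ℂ} {m n : ℕ →₀ ℕ} (h : Lead p m) (hne : m ≠ n)
    (hs : qq n ≤ qq m) : coeff n p = 0 := by
  obtain ⟨u, hu, r, rfl, hr⟩ := h
  have : coeff n r = 0 := by
    by_contra h
    have := hr n (mem_support_iff.2 h)
    omega
  simp [this, hne]

lemma lead_linearIndependent (B : (ℕ →₀ ℕ) → MvPolynomial ℕ ℂ) (hB : ∀ m, Lead (B m) m) :
    LinearIndependent ℂ B := by
  rw [linearIndependent_iff]
  intro l hl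
  by_contra hne
  obtain ⟨m, hm, hmin⟩ := l.support.exists_min_image qq (Finsupp.support_nonempty_iff.2 hne)
  have := congrArg (coeff m) hl
  rw [Finsupp.linearCombination_apply, Finsupp.sum, coeff_sum, Finset.sum_eq_single m] at this
  · simp only [coeff_smul, coeff_zero, smul_eq_mul, mul_eq_zero] at this
    rcases this with h | h
    · exact (Finsupp.mem_support_iff.1 hm) h
    · exact (hB m).coeff_ne h
  · intro b hb hbm
    rw [coeff_smul, (hB b).coeff_eq hbm (hmin b hb), smul_zero]
  · intro h; exact absurd hm h

/-- Induction principle. -/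
lemma mem_of_lead (S : Submodule ℂ (MvPolynomial ℕ ℂ)) (d : ℕ)
    (h : ∀ m, dg m = d → monomial m (1:ℂ) ∈ S ∨ ∃ p ∈ S, Lead p m) :
    ∀ m, dg m = d → monomial m (1:ℂ) ∈ S := by
  suffices H : ∀ N m, dg m = d → wt m * wt m - qq m = N → monomial m (1:ℂ) ∈ S from
    fun m hm => H _ m hm rfl
  intro N
  induction N using Nat.strong_induction_on with
  | _ N ih =>
    intro m hm hN
    rcases h m hm with h | ⟨p, hp, u, hu, r, rfl, hr⟩
    · exact h
    · have hrS : r ∈ S := by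
        rw [r.as_sum]
        refine S.sum_mem fun x hx => ?_
        have hx' := hr x hx
        have h1 := qq_le x
        have : monomial x (1:ℂ) ∈ S := by
          refine ih (wt x * wt x - qq x) ?_ x (by omega) rfl
          rw [hx'.2.1] at h1 ⊢
          omega
        have := S.smul_mem (coeff x r) this
        rwa [smul_monomial, smul_eq_mul, mul_one] at this
      have h2 : monomial m u ∈ S := by
        have := S.sub_mem hp hrS
        rwa [add_sub_cancel_right] at this
      have := S.smul_mem u⁻¹ h2
      rwa [smul_monomial, smul_eq_mul, inv_mul_cancel₀ hu] at this

/-- exponent vector -/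
def mm {n : ℕ} (a : Fin n → ℕ) : ℕ →₀ ℕ := ∑ i, Finsupp.single (a i) 1

lemma prod_X {n : ℕ} (a : Fin n → ℕ) :
    ∏ i, (X (a i) : MvPolynomial ℕ ℂ) = monomial (mm a) 1 := by
  simp only [mm, X]
  rw [monomial_sum_one]

lemma eMon_eq {n : ℕ} (a : Fin n → ℕ) : eMon n a = monomial (mm a) 1 := prod_X a

lemma mm_apply {n : ℕ} (a : Fin n → ℕ) (i : ℕ) :
    mm a i = (Finset.univ.filter fun b : Fin n => a b = i).card := by
  rw [Finset.card_filter, mm, Finsupp.finsetSum_apply]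
  simp only [Finsupp.single_apply]

lemma weight_mm {n : ℕ} (w : ℕ → ℕ) (a : Fin n → ℕ) :
    Finsupp.weight w (mm a) = ∑ i, w (a i) := by
  simp [mm, Finsupp.weight_single]

lemma mm_toMultiset {n : ℕ} (a : Fin n → ℕ) :
    Finsupp.toMultiset (mm a) = (List.ofFn a : Multiset ℕ) := by
  rw [← Fin.univ_val_map, mm, map_sum]
  simp only [Finsupp.toMultiset_single, one_smul]
  rw [← Multiset.sum_map_singleton (Multiset.map a Finset.univ.val), Multiset.map_map]
  rfl

lemma mm_inj {n : ℕ} {a b : Fin n → ℕ} (ha : Antitone a) (hb : Antitone b) (h : mm a = mm b) :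
    a = b := by
  have h1 := congrArg Finsupp.toMultiset h
  rw [mm_toMultiset, mm_toMultiset, Multiset.coe_eq_coe] at h1
  exact List.ofFn_injective (h1.eq_of_sortedGE ha.sortedGE_ofFn hb.sortedGE_ofFn)

lemma mm_surj {n : ℕ} (m : ℕ →₀ ℕ) (h : dg m = n) : ∃ a : Fin n → ℕ, Antitone a ∧ mm a = m := by
  set L := (Finsupp.toMultiset m).sort (· ≥ ·) with hL
  have hlen : L.length = n := by
    rw [hL, Multiset.length_sort, Finsupp.card_toMultiset, ← h]
    simp only [Finsupp.weight_apply, smul_eq_mul, mul_one]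
    rfl
  subst hlen
  refine ⟨L.get, ?_, ?_⟩
  · exact (Multiset.pairwise_sort _ _).sortedGE.antitone_get
  · apply Multiset.toFinsupp.symm.injective
    change Finsupp.toMultiset _ = Finsupp.toMultiset _
    rw [mm_toMultiset, List.ofFn_get, hL, Multiset.sort_eq]

lemma wheel_zero (k : ℕ) (t : ℂ) (ht : IsPrimitiveRoot t (k + 1)) (m : ℕ) (hm : ¬ (k + 1) ∣ m) :
    wheelCoeff k t m = 0 := by
  have h1 : t ^ m • wheelCoeff k t m = wheelCoeff k t m := by
    unfold wheelCoeff
    rw [Finset.smul_sum]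
    refine Finset.sum_bij' (fun a _ => fun i => a (i - 1)) (fun a _ => fun i => a (i + 1))
      ?_ ?_ ?_ ?_ ?_
    · intro a ha
      rw [Finset.Nat.mem_antidiagonalTuple] at ha ⊢
      rw [← ha]
      exact Equiv.sum_comp (Equiv.subRight 1) a
    · intro a ha
      rw [Finset.Nat.mem_antidiagonalTuple] at ha ⊢
      rw [← ha]
      exact Equiv.sum_comp (Equiv.addRight 1) a
    · intro a ha; simp
    · intro a ha; simp
    · intro a ha
      rw [Finset.Nat.mem_antidiagonalTuple] at ha
      have hX : ∏ i, (X (a (i - 1)) : MvPolynomial ℕ ℂ) = ∏ i, X (a i) :=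
        Equiv.prod_comp (Equiv.subRight 1) (fun i => (X (a i) : MvPolynomial ℕ ℂ))
      have hc : ∏ i : Fin (k+1), t ^ ((i : ℕ) * a (i - 1))
          = t ^ m * ∏ i : Fin (k+1), t ^ ((i : ℕ) * a i) := by
        rw [← Equiv.prod_comp (Equiv.addRight (1 : Fin (k+1))), ← ha, ← Finset.prod_pow_eq_pow_sum,
          ← Finset.prod_mul_distrib]
        refine Finset.prod_congr rfl fun i _ => ?_
        have : t ^ ((i + 1 : Fin (k+1)) : ℕ) = t ^ (i : ℕ) * t := by
          rw [Fin.val_add, ← pow_succ]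
          rw [← pow_mod_orderOf t (i + 1), ← ht.eq_orderOf, ← pow_mod_orderOf, ← ht.eq_orderOf]
          simp
        simp only [Equiv.coe_addRight, add_sub_cancel_right]
        rw [pow_mul, this, mul_pow, ← pow_mul, mul_comm]
      rw [hX, hc, smul_smul]
  have h2 : t ^ m ≠ 1 := fun h => hm (ht.dvd_of_pow_eq_one m h)
  have h3 : (t ^ m - 1) • wheelCoeff k t m = 0 := by rw [sub_smul, h1, one_smul, sub_self]
  exact (smul_eq_zero.1 h3).resolve_left (sub_ne_zero.2 h2)

lemma wheel_lead (k : ℕ) (t : ℂ) (ht : IsPrimitiveRoot t (k + 1)) (j : ℕ) :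
    Lead (wheelCoeff k t ((k + 1) * j)) (Finsupp.single j (k + 1)) := by
  classical
  have ht0 : t ≠ 0 := ht.ne_zero (by omega)
  have hmem : (fun _ : Fin (k+1) => j) ∈ Finset.Nat.antidiagonalTuple (k + 1) ((k + 1) * j) := by
    rw [Finset.Nat.mem_antidiagonalTuple]; simp
  refine ⟨∏ i : Fin (k + 1), t ^ ((i : ℕ) * j),
    Finset.prod_ne_zero_iff.2 fun i _ => pow_ne_zero _ ht0,
    ∑ a ∈ (Finset.Nat.antidiagonalTuple (k + 1) ((k + 1) * j)).erase (fun _ => j),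
    (∏ i : Fin (k + 1), t ^ ((i : ℕ) * a i)) • ∏ i, X (a i), ?_, ?_⟩
  · rw [wheelCoeff, ← Finset.add_sum_erase _ _ hmem]
    congr 1
    rw [prod_X, smul_monomial, smul_eq_mul, mul_one]
    simp [mm]
  · intro x hx
    obtain ⟨a, ha, hxa⟩ := Finset.mem_biUnion.1 (support_sum hx)
    rw [prod_X, smul_monomial] at hxa
    have hx' : x = mm a := by simpa using support_monomial_subset hxa
    obtain ⟨hne, ha⟩ := Finset.mem_erase.1 ha
    rw [Finset.Nat.mem_antidiagonalTuple] at ha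
    subst hx'
    simp only [weight_mm, Finsupp.weight_single, smul_eq_mul]
    refine ⟨by simp, ha, ?_⟩
    obtain ⟨i, hi⟩ := Function.ne_iff.1 hne
    have h1 : (0:ℤ) < ∑ i, ((a i : ℤ) - j) ^ 2 := by
      refine Finset.sum_pos' (fun i _ => sq_nonneg _) ⟨i, Finset.mem_univ _, ?_⟩
      have : (a i : ℤ) - j ≠ 0 := sub_ne_zero.2 (by exact_mod_cast hi)
      positivity
    have h2 : ∑ i, ((a i : ℤ) - j) ^ 2
        = ∑ i, (a i : ℤ) ^ 2 - 2 * j * ∑ i, (a i : ℤ) + (k + 1) * j ^ 2 := by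
      simp only [sub_sq, Finset.sum_add_distrib, Finset.sum_sub_distrib, Finset.mul_sum]
      congr 1
      · congr 1
        exact Finset.sum_congr rfl fun i _ => by ring
      · simp
    have h3 : ∑ i, (a i : ℤ) = (k + 1) * j := by exact_mod_cast ha
    rw [h2, h3] at h1
    zify
    nlinarith

/-- The triangular basis -/
def BB (k : ℕ) (t : ℂ) (m : ℕ →₀ ℕ) : MvPolynomial ℕ ℂ :=
  m.prod fun j c => wheelCoeff k t ((k + 1) * j) ^ (c / (k + 1)) * X j ^ (c % (k + 1))

lemma BB_lead (k : ℕ) (t : ℂ) (ht : IsPrimitiveRoot t (k + 1)) (m : ℕ →₀ ℕ) :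
    Lead (BB k t m) m := by
  have := Lead.prod m.support
    (fun j => wheelCoeff k t ((k + 1) * j) ^ (m j / (k + 1)) * X j ^ (m j % (k + 1)))
    (fun j => Finsupp.single j (m j)) (fun j => ?_)
  · have h : ∑ j ∈ m.support, Finsupp.single j (m j) = m := Finsupp.sum_single m
    rwa [h] at this
  · have h := ((wheel_lead k t ht j).pow (m j / (k + 1))).mul
      ((lead_monomial (Finsupp.single j 1)).pow (m j % (k + 1)))
    have e : Finsupp.single j (m j) = (m j / (k + 1)) • Finsupp.single j (k + 1)
        + (m j % (k + 1)) • Finsupp.single j 1 := ?_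
    · rw [e]; exact h
    rw [Finsupp.smul_single, Finsupp.smul_single, ← Finsupp.single_add]
    congr 1
    simp only [smul_eq_mul, mul_one]
    rw [mul_comm]; exact (Nat.div_add_mod _ _).symm

lemma BB_adm (k : ℕ) (t : ℂ) (m : ℕ →₀ ℕ) (h : ∀ j, m j ≤ k) : BB k t m = monomial m 1 := by
  rw [BB, monomial_eq, C_1, one_mul]
  refine Finsupp.prod_congr fun j _ => ?_
  have := h j
  rw [Nat.div_eq_of_lt (by omega), Nat.mod_eq_of_lt (by omega), pow_zero, one_mul]

lemma BB_mul (k : ℕ) (t : ℂ) (m : ℕ →₀ ℕ) (j : ℕ) :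
    wheelCoeff k t ((k + 1) * j) * BB k t m = BB k t (m + Finsupp.single j (k + 1)) := by
  have he : (m + Finsupp.single j (k + 1)).erase j = m.erase j := by
    ext i
    by_cases h : i = j
    · simp [h]
    · simp [Finsupp.erase_ne h, Finsupp.single_eq_of_ne h]
  rw [BB, BB, ← Finsupp.mul_prod_erase' m j _ (by simp),
    ← Finsupp.mul_prod_erase' (m + Finsupp.single j (k + 1)) j _ (by simp), he]
  simp only [Finsupp.add_apply, Finsupp.single_eq_same, Nat.add_mod_right]
  rw [Nat.add_div_right _ (by omega)]
  ring

lemma JE_le (k n : ℕ) (t : ℂ) (ht : IsPrimitiveRoot t (k + 1)) :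
    JEsub k n t ≤ Submodule.span ℂ (BB k t '' {m | ¬ ∀ j, m j ≤ k}) := by
  refine Submodule.span_le.2 ?_
  rintro p ⟨M, l, -, rfl⟩
  by_cases hM : (k + 1) ∣ M
  · obtain ⟨j, rfl⟩ := hM
    have h1 : eMon (n - k - 1) l ∈ Submodule.span ℂ (Set.range (BB k t)) := by
      rw [eMon_eq]
      exact mem_of_lead _ (dg (mm l)) (fun m _ => Or.inr ⟨BB k t m,
        Submodule.subset_span (Set.mem_range_self m), BB_lead k t ht m⟩) _ rfl
    have h2 : Submodule.span ℂ (Set.range (BB k t)) ≤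
        (Submodule.span ℂ (BB k t '' {m | ¬ ∀ j, m j ≤ k})).comap
          (LinearMap.mulLeft ℂ (wheelCoeff k t ((k + 1) * j))) := by
      refine Submodule.span_le.2 ?_
      rintro _ ⟨m, rfl⟩
      refine Submodule.subset_span ⟨m + Finsupp.single j (k + 1), ?_, (BB_mul k t m j).symm⟩
      intro h
      have := h j
      simp at this
      omega
    exact h2 h1
  · rw [wheel_zero k t ht M hM, zero_mul]; exact Submodule.zero_mem _

lemma span_all (k n : ℕ) (t : ℂ) (ht : IsPrimitiveRoot t (k + 1)) (hn : k + 1 ≤ n)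
    (m : ℕ →₀ ℕ) (hm : dg m = n) :
    monomial m (1:ℂ) ∈ JEsub k n t ⊔ Submodule.span ℂ
      (Set.range fun l : {l : Fin n → ℕ // Antitone l ∧
          ∀ i : ℕ, (Finset.univ.filter fun a : Fin n => l a = i).card ≤ k} => eMon n l.1) := by
  refine mem_of_lead _ n (fun m hm => ?_) m hm
  by_cases hadm : ∀ j, m j ≤ k
  · left
    obtain ⟨a, ha, rfl⟩ := mm_surj m hm
    refine Submodule.mem_sup_right (Submodule.subset_span ⟨⟨a, ha, fun i => ?_⟩, eMon_eq a⟩)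
    rw [← mm_apply]; exact hadm i
  · right
    push Not at hadm
    obtain ⟨j, hj⟩ := hadm
    have hle : Finsupp.single j (k + 1) ≤ m := by
      rw [Finsupp.single_le_iff]; omega
    obtain ⟨m', rfl⟩ := le_iff_exists_add.1 hle
    have hd : dg m' = n - k - 1 := by
      rw [map_add, Finsupp.weight_single] at hm
      simp only [smul_eq_mul, mul_one] at hm
      omega
    obtain ⟨a, ha, rfl⟩ := mm_surj m' hd
    exact ⟨_, Submodule.mem_sup_left (Submodule.subset_span ⟨(k + 1) * j, a, ha, rfl⟩),
      (wheel_lead k t ht j).mul (eMon_eq a ▸ lead_monomial _)⟩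

end Helpers

/-- in the quotient `E_n^{(k,2)} = E_n/(J·E_{n-k-1})`, the images of the
monomials `e_λ` with `λ ∈ π_n` admissible (every value occurring at most `k` times)
form a basis of the quotient: they are linearly independent and span. -/
theorem admissible_eMon_basis_quotient
    (k n : ℕ) (hk : 0 < k) (t : ℂ) (ht : IsPrimitiveRoot t (k + 1)) (hn : k + 1 ≤ n) :
    LinearIndependent ℂ
      (fun l : {l : Fin n → ℕ // Antitone l ∧
          ∀ i : ℕ, (Finset.univ.filter fun a : Fin n => l a = i).card ≤ k} =>
        (Submodule.Quotient.mk
          (⟨eMon n l.1, Submodule.subset_span ⟨l.1, l.2.1, rfl⟩⟩ : Esub n) :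
          ↥(Esub n) ⧸ (JEsub k n t).comap (Esub n).subtype)) ∧
    Submodule.span ℂ
      (Set.range fun l : {l : Fin n → ℕ // Antitone l ∧
          ∀ i : ℕ, (Finset.univ.filter fun a : Fin n => l a = i).card ≤ k} =>
        (Submodule.Quotient.mk
          (⟨eMon n l.1, Submodule.subset_span ⟨l.1, l.2.1, rfl⟩⟩ : Esub n) :
          ↥(Esub n) ⧸ (JEsub k n t).comap (Esub n).subtype)) = ⊤ := by
  constructor
  · have hinj : Function.Injective (fun l : {l : Fin n → ℕ // Antitone l ∧
          ∀ i : ℕ, (Finset.univ.filter fun a : Fin n => l a = i).card ≤ k} => mm l.1) :=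
      fun a b h => Subtype.ext (mm_inj a.2.1 b.2.1 h)
    have hB := lead_linearIndependent (BB k t) (BB_lead k t ht)
    have hv : ∀ l : {l : Fin n → ℕ // Antitone l ∧
          ∀ i : ℕ, (Finset.univ.filter fun a : Fin n => l a = i).card ≤ k},
        eMon n l.1 = BB k t (mm l.1) := by
      intro l
      rw [eMon_eq, BB_adm]
      intro j; rw [mm_apply]; exact l.2.2 j
    have hLI : LinearIndependent ℂ (fun l : {l : Fin n → ℕ // Antitone l ∧
          ∀ i : ℕ, (Finset.univ.filter fun a : Fin n => l a = i).card ≤ k} =>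
          (⟨eMon n l.1, Submodule.subset_span ⟨l.1, l.2.1, rfl⟩⟩ : Esub n)) := by
      apply LinearIndependent.of_comp (Esub n).subtype
      have := hB.comp _ hinj
      have e : (BB k t ∘ fun l : {l : Fin n → ℕ // Antitone l ∧
          ∀ i : ℕ, (Finset.univ.filter fun a : Fin n => l a = i).card ≤ k} => mm l.1)
          = fun l => eMon n l.1 := funext fun l => (hv l).symm
      rw [e] at this
      exact this
    refine hLI.map (f := ((JEsub k n t).comap (Esub n).subtype).mkQ) ?_
    rw [Submodule.ker_mkQ, Submodule.disjoint_def]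
    intro x hx hx2
    have hdis := hB.disjoint_span_image (s := {m | ∀ j, m j ≤ k}) (t := {m | ¬ ∀ j, m j ≤ k})
      (Set.disjoint_left.2 fun m h1 h2 => h2 h1)
    have h1 : (x : MvPolynomial ℕ ℂ) ∈ Submodule.span ℂ (BB k t '' {m | ∀ j, m j ≤ k}) := by
      have : Submodule.span ℂ (Set.range fun l : {l : Fin n → ℕ // Antitone l ∧
          ∀ i : ℕ, (Finset.univ.filter fun a : Fin n => l a = i).card ≤ k} =>
          (⟨eMon n l.1, Submodule.subset_span ⟨l.1, l.2.1, rfl⟩⟩ : Esub n)) ≤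
          (Submodule.span ℂ (BB k t '' {m | ∀ j, m j ≤ k})).comap (Esub n).subtype := by
        refine Submodule.span_le.2 ?_
        rintro _ ⟨l, rfl⟩
        refine Submodule.subset_span ⟨mm l.1, ?_, (hv l).symm⟩
        intro j; rw [mm_apply]; exact l.2.2 j
      exact this hx
    exact Subtype.ext (Submodule.disjoint_def.1 hdis _ h1 (JE_le k n t ht hx2))
  · rw [eq_top_iff]
    rintro x -
    obtain ⟨⟨p, hp⟩, rfl⟩ := Submodule.Quotient.mk_surjective _ x
    have h1 : p ∈ JEsub k n t ⊔ Submodule.span ℂ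
      (Set.range fun l : {l : Fin n → ℕ // Antitone l ∧
          ∀ i : ℕ, (Finset.univ.filter fun a : Fin n => l a = i).card ≤ k} => eMon n l.1) := by
      refine (Submodule.span_le.2 ?_ : Esub n ≤ _) hp
      rintro _ ⟨l, hl, rfl⟩
      rw [eMon_eq]
      exact span_all k n t ht hn _ (by simp [weight_mm])
    obtain ⟨a, ha, b, hb, rfl⟩ := Submodule.mem_sup.1 h1
    have key : ∀ b ∈ Submodule.span ℂ
      (Set.range fun l : {l : Fin n → ℕ // Antitone l ∧
          ∀ i : ℕ, (Finset.univ.filter fun a : Fin n => l a = i).card ≤ k} => eMon n l.1),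
        ∃ h : b ∈ Esub n, (Submodule.Quotient.mk (⟨b, h⟩ : Esub n) :
          ↥(Esub n) ⧸ (JEsub k n t).comap (Esub n).subtype) ∈ Submodule.span ℂ
      (Set.range fun l : {l : Fin n → ℕ // Antitone l ∧
          ∀ i : ℕ, (Finset.univ.filter fun a : Fin n => l a = i).card ≤ k} =>
        (Submodule.Quotient.mk
          (⟨eMon n l.1, Submodule.subset_span ⟨l.1, l.2.1, rfl⟩⟩ : Esub n) :
          ↥(Esub n) ⧸ (JEsub k n t).comap (Esub n).subtype)) := by
      intro b hb
      induction hb using Submodule.span_induction with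
      | mem x hx =>
        obtain ⟨l, rfl⟩ := hx
        exact ⟨Submodule.subset_span ⟨l.1, l.2.1, rfl⟩, Submodule.subset_span ⟨l, rfl⟩⟩
      | zero => exact ⟨Submodule.zero_mem _, Submodule.zero_mem _⟩
      | add x y _ _ hx hy =>
        obtain ⟨h1, h2⟩ := hx
        obtain ⟨h3, h4⟩ := hy
        exact ⟨Submodule.add_mem _ h1 h3, Submodule.add_mem _ h2 h4⟩
      | smul c x _ hx =>
        obtain ⟨h1, h2⟩ := hx
        exact ⟨Submodule.smul_mem _ c h1, Submodule.smul_mem _ c h2⟩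
    obtain ⟨hbE, hbS⟩ := key b hb
    convert hbS using 1
    rw [Submodule.Quotient.eq]
    simpa using ha
end

section
/- For k = 1 and r = 2 (so t = −1), the space F_n^{(1,2)} consists exactly of the polynomials of the form ∏_{1 ≤ i < j ≤ n} (x_i + x_j) · g(x_1,…,x_n), where g ranges over all symmetric polynomials in ℂ[x_1,…,x_n]. -/
open MvPolynomial

lemma aux_dvd_of_subst {n : ℕ} (i j : Fin n) (p : MvPolynomial (Fin n) ℂ)
    (h : aeval (Function.update (X : Fin n → MvPolynomial (Fin n) ℂ) i (-X j)) p = 0) :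
    (X i + X j : MvPolynomial (Fin n) ℂ) ∣ p := by
  let I : Ideal (MvPolynomial (Fin n) ℂ) := Ideal.span {X i + X j}
  have key : (Ideal.Quotient.mkₐ ℂ I).comp
      (aeval (Function.update (X : Fin n → MvPolynomial (Fin n) ℂ) i (-X j))) =
      Ideal.Quotient.mkₐ ℂ I := by
    apply MvPolynomial.algHom_ext
    intro k
    simp only [AlgHom.comp_apply, aeval_X, Ideal.Quotient.mkₐ_eq_mk]
    by_cases hk : k = i
    · subst hk
      rw [Function.update_self, eq_comm, Ideal.Quotient.eq, Ideal.mem_span_singleton]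
      simp
    · rw [Function.update_of_ne hk]
  have h2 := DFunLike.congr_fun key p
  simp only [AlgHom.comp_apply, h, map_zero, Ideal.Quotient.mkₐ_eq_mk] at h2
  rw [← Ideal.mem_span_singleton]
  exact Ideal.Quotient.eq_zero_iff_mem.1 h2.symm

lemma aux_ne_zero {n : ℕ} (i j : Fin n) : (X i + X j : MvPolynomial (Fin n) ℂ) ≠ 0 := by
  intro h
  have := congrArg (eval (fun _ => (1 : ℂ))) h
  norm_num at this

lemma aux_prime {n : ℕ} {i j : Fin n} (hij : i ≠ j) :
    Prime (X i + X j : MvPolynomial (Fin n) ℂ) := by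
  have hz : aeval (Function.update (X : Fin n → MvPolynomial (Fin n) ℂ) i (-X j))
      (X i + X j : MvPolynomial (Fin n) ℂ) = 0 := by
    simp [Function.update_of_ne hij.symm]
  refine ⟨aux_ne_zero i j, fun hu => ?_, fun a b hab => ?_⟩
  · have := hu.map (aeval (Function.update (X : Fin n → MvPolynomial (Fin n) ℂ) i (-X j)))
    rw [hz] at this
    exact not_isUnit_zero this
  · obtain ⟨c, hc⟩ := hab
    have := congrArg (aeval (Function.update (X : Fin n → MvPolynomial (Fin n) ℂ) i (-X j))) hc
    rw [map_mul, map_mul, hz, zero_mul, mul_eq_zero] at this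
    exact this.imp (aux_dvd_of_subst i j a) (aux_dvd_of_subst i j b)

lemma aux_not_dvd {n : ℕ} {i j k l : Fin n} (hij : i < j) (hkl : k < l)
    (hne : (i, j) ≠ (k, l)) :
    ¬ (X i + X j : MvPolynomial (Fin n) ℂ) ∣ X k + X l := by
  rintro ⟨c, hc⟩
  have := congrArg (eval (fun m => if m = i then (1 : ℂ) else if m = j then -1 else 5)) hc
  simp only [map_add, map_mul, eval_X, if_true, if_neg hij.ne'] at this
  have hne' : ¬ (i = k ∧ j = l) := by simpa using hne
  split_ifs at this <;> first | (norm_num at this; done) | (exfalso; subst_vars; omega)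

lemma aux_symm (n : ℕ) : (∏ p ∈ Finset.univ.filter (fun p : Fin n × Fin n => p.1 < p.2),
    (X p.1 + X p.2 : MvPolynomial (Fin n) ℂ)).IsSymmetric := by
  intro e
  rw [map_prod]
  simp only [map_add, rename_X]
  have inj : ∀ a b : Fin n, a < b → e a ≠ e b := fun a b h h' => h.ne (e.injective h')
  have inj' : ∀ a b : Fin n, a < b → e.symm a ≠ e.symm b :=
    fun a b h h' => h.ne (e.symm.injective h')
  refine Finset.prod_nbij'
    (fun p => if e p.1 < e p.2 then (e p.1, e p.2) else (e p.2, e p.1))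
    (fun p => if e.symm p.1 < e.symm p.2 then (e.symm p.1, e.symm p.2)
      else (e.symm p.2, e.symm p.1)) ?_ ?_ ?_ ?_ ?_
  · rintro ⟨a, b⟩ h
    simp only [Finset.mem_filter, Finset.mem_univ, true_and] at h ⊢
    have := inj a b h
    split_ifs <;> simp only <;> omega
  · rintro ⟨a, b⟩ h
    simp only [Finset.mem_filter, Finset.mem_univ, true_and] at h ⊢
    have := inj' a b h
    split_ifs <;> simp only <;> omega
  · rintro ⟨a, b⟩ h
    simp only [Finset.mem_filter, Finset.mem_univ, true_and] at h ⊢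
    by_cases h1 : e a < e b <;> simp [h1, h, h.not_gt]
  · rintro ⟨a, b⟩ h
    simp only [Finset.mem_filter, Finset.mem_univ, true_and] at h ⊢
    by_cases h1 : e.symm a < e.symm b <;> simp [h1, h, h.not_gt]
  · rintro ⟨a, b⟩ h
    by_cases h1 : e a < e b <;> simp [h1, add_comm]

lemma aux_perm {n : ℕ} {a b i j : Fin n} (hab : a ≠ b) (hij : i ≠ j) :
    ∃ s : Equiv.Perm (Fin n), s a = i ∧ s b = j := by
  refine ⟨(Equiv.swap a i).trans (Equiv.swap (Equiv.swap a i b) j), ?_, ?_⟩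
  · simp only [Equiv.trans_apply, Equiv.swap_apply_left]
    apply Equiv.swap_apply_of_ne_of_ne _ hij
    intro h
    have : Equiv.swap a i a = Equiv.swap a i b := by rw [← h, Equiv.swap_apply_left]
    exact hab ((Equiv.swap a i).injective this)
  · simp

lemma aux_eval {n : ℕ} (i j : Fin n) (v : Fin n → ℂ) (f : MvPolynomial (Fin n) ℂ) :
    eval v (aeval (Function.update (X : Fin n → MvPolynomial (Fin n) ℂ) i (-X j)) f) =
      eval (Function.update v i (-v j)) f := by
  induction f using MvPolynomial.induction_on with
  | C a => simp [algebraMap_eq]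
  | add p q hp hq => rw [map_add, map_add, map_add, hp, hq]
  | mul_X p k hp =>
    rw [map_mul, map_mul, map_mul, hp, aeval_X, eval_X]
    by_cases hk : k = i
    · subst hk; simp
    · simp [Function.update_of_ne hk]

/-- For `k = 1`, `r = 2` (so `t = -1`), the space `F_n^{(1,2)}` consists exactly
of the polynomials `∏_{1 ≤ i < j ≤ n} (x_i + x_j) · g` with `g` symmetric. -/
theorem F12_eq_vandermonde_like_times_symmetric
    (n : ℕ) (hn : 2 ≤ n) (f : MvPolynomial (Fin n) ℂ) :
    (f.IsSymmetric ∧ ∀ (x : ℂ) (y : Fin n → ℂ),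
      MvPolynomial.eval
        (fun j : Fin n => if (j : ℕ) = 0 then x
          else if (j : ℕ) = 1 then -x else y j) f = 0)
    ↔ ∃ g : MvPolynomial (Fin n) ℂ, g.IsSymmetric ∧
        f = (∏ p ∈ Finset.univ.filter (fun p : Fin n × Fin n => p.1 < p.2),
              (MvPolynomial.X p.1 + MvPolynomial.X p.2)) * g := by
  constructor
  · rintro ⟨hs, hv⟩
    have hd : (∏ p ∈ Finset.univ.filter (fun p : Fin n × Fin n => p.1 < p.2),
        (X p.1 + X p.2 : MvPolynomial (Fin n) ℂ)) ∣ f := by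
      apply Finset.prod_dvd_of_isRelPrime
      · rintro ⟨i, j⟩ hij ⟨k, l⟩ hkl hne
        simp only [Finset.coe_filter, Finset.mem_univ, true_and, Set.mem_ofPred_eq] at hij hkl
        exact (aux_prime hij.ne).irreducible.isRelPrime_iff_not_dvd.2 (aux_not_dvd hij hkl hne)
      · rintro ⟨i, j⟩ hij
        simp only [Finset.mem_filter, Finset.mem_univ, true_and] at hij
        apply aux_dvd_of_subst
        apply MvPolynomial.funext
        intro v
        obtain ⟨s, hs0, hs1⟩ := aux_perm (a := (⟨0, by omega⟩ : Fin n)) (b := ⟨1, by omega⟩)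
          (by simp) hij.ne
        have h1 := hv (-v j) (fun m => Function.update v i (-v j) (s m))
        rw [map_zero, ← h1]
        have h2 : (fun m : Fin n => if (m : ℕ) = 0 then -v j
          else if (m : ℕ) = 1 then - -v j else Function.update v i (-v j) (s m)) =
            Function.update v i (-v j) ∘ s := by
          funext m
          simp only [Function.comp]
          split_ifs with a b
          · rw [show m = ⟨0, by omega⟩ from Fin.ext a, hs0, Function.update_self]
          · rw [show m = ⟨1, by omega⟩ from Fin.ext b, hs1, Function.update_of_ne hij.ne', neg_neg]
          · rfl
        rw [h2, ← eval_rename, hs s]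
        exact aux_eval i j v f
    obtain ⟨g, hg⟩ := hd
    refine ⟨g, fun e => ?_, hg⟩
    have h := hs e
    rw [hg, map_mul, aux_symm n e] at h
    refine mul_left_cancel₀ ?_ h
    exact Finset.prod_ne_zero_iff.2 fun p _ => aux_ne_zero _ _
  · rintro ⟨g, hg, rfl⟩
    refine ⟨(aux_symm n).mul hg, fun x y => ?_⟩
    rw [map_mul, map_prod, Finset.prod_eq_zero (i := (⟨0, by omega⟩, ⟨1, by omega⟩)), zero_mul]
    · simp
    · simp
end
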